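/- Fix T > 0 and S₀ > 0, and let κ, κ̄ and the payoff data be as defined. For λ ∈ [0,1] put α(λ; z, t) := (1 − κ(λ,1)·∫_t^T z·e^{κ(λ,z)(u−T)}·e^{½σ²z(z−1)(T−u)} du)·e^{κ(λ,z)(T−t)}, w(λ) := ∫_ℝ S₀^{z_y}·α(λ; z_y, 0)·p(z_y) dy, c := ∫_ℝ S₀^{z_y}·e^{½σ²z_y(z_y−1)T}·p(z_y) dy, h(λ; t, y, z) := κ̄(λ;y,z)α(λ;y,t)α(λ;z,t) − κ̄(λ;y,1)α(λ;y,t)·z·e^{½σ²z(z−1)(T−t)} − κ̄(λ;z,1)α(λ;z,t)·y·e^{½σ²y(y−1)(T−t)} + κ̄(λ;1,1)·yz·e^{½σ²(z(z−1)+y(y−1))(T−t)}, J₂(λ; t, y, z) := S₀^{y+z}·e^{κ(λ,y+z)t}·h(λ; t, y, z), and ε²(λ) := (w(λ) − c)² + ∫_ℝ∫_ℝ∫₀ᵀ J₂(λ; t, z_u, z_v)·p(z_u)p(z_v) dt du dv. Then λ ↦ ε²(λ) is twice continuously differentiable on [0,1], ε²(0) = 0, (ε²)'(0) = 0, and ½·(ε²)''(0)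 = ¼σ⁴(s₄ − s₃²)·∫₀ᵀ∫_ℝ D₂(t, S₀e^{μt+x})² dγ_{σ²t}(x) dt + (1/36)·s₃²·σ⁶·A(0,S₀)² + s₃²·∫₀ᵀ∫_ℝ (½σ²·D₂(t, S₀e^{μt+x}) + ⅙σ⁴·B(t, S₀e^{μt+x}))² dγ_{σ²t}(x) dt, where s₃ := (∫x³K(dx))/σ³, s₄ := (∫x⁴K(dx))/σ⁴, and: if μ + ½σ² = 0 then A(t,s) := (T−t)(D₃(t,s) + 3D₂(t,s)) and B(t,s) := (T−t)(D₄(t,s) + 6D₃(t,s) + 6D₂(t,s)); if μ + ½σ² ≠ 0 then A(t,s) := (Ã(t, s·e^{(μ+½σ²)(T−t)}) − Ã(t,s))/(μ+½σ²) and B(t,s) := (B̃(t, s·e^{(μ+½σ²)(T−t)}) − B̃(t,s))/(μ+½σ²), with Ã(t,s) := D₂(t,s) + D₁(t,s) − D₀(t,s) and B̃(t,s) := D₃(t,s) + 3D₂(t,s). -/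

import Mathlib

open MeasureTheory ProbabilityTheory Complex Set
open scoped Classical

/-- Cumulant generating function `κ(λ, z)` of the interpolating family. -/
noncomputable def kappa (μ c : ℝ) (K : Measure ℝ) (lam : ℝ) (z : ℂ) : ℂ :=
  if lam = 0 then (μ : ℂ) * z + (((c + ∫ x : ℝ, x ^ 2 ∂K) : ℝ) : ℂ) / 2 * z ^ 2
  else (μ : ℂ) * z + (c : ℂ) / 2 * z ^ 2 +
    ((lam : ℂ) ^ 2)⁻¹ *
      ∫ x : ℝ, (Complex.exp ((lam : ℂ) * z * (x : ℂ)) - 1 - (lam : ℂ) * z * (x : ℂ)) ∂K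

noncomputable def kbar (μ c : ℝ) (K : Measure ℝ) (lam : ℝ) (y z : ℂ) : ℂ :=
  kappa μ c K lam (y + z) - kappa μ c K lam y - kappa μ c K lam z

noncomputable def gamLK (μ c : ℝ) (K : Measure ℝ) (lam : ℝ) (z : ℂ) : ℂ :=
  kbar μ c K lam z 1 / kbar μ c K lam 1 1

noncomputable def etaLK (μ c : ℝ) (K : Measure ℝ) (lam : ℝ) (z : ℂ) : ℂ :=
  kappa μ c K lam z - kappa μ c K lam 1 * gamLK μ c K lam z

noncomputable def cpowR (s : ℝ) (z : ℂ) : ℂ := Complex.exp (z * Real.log s)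

noncomputable def zLine (R y : ℝ) : ℂ := (R : ℂ) + (y : ℂ) * Complex.I

/-- Fourier transform `l̂(y) = ∫ l(x) e^{-ixy} dx`. -/
noncomputable def lhat (l : ℝ → ℝ) (y : ℝ) : ℂ :=
  ∫ x : ℝ, (l x : ℂ) * Complex.exp (-(Complex.I * (x : ℂ) * (y : ℂ)))

noncomputable def pCoef (l : ℝ → ℝ) (y : ℝ) : ℂ := lhat l y / (2 * (Real.pi : ℂ))

/-- Black-Scholes cash greek `D_n(t,s)` in integral form (with `C = D_0`). -/
noncomputable def cashGreek (σ2 T R : ℝ) (l : ℝ → ℝ) (n : ℕ) (t s : ℝ) : ℂ :=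
  ∫ y : ℝ, (∏ k ∈ Finset.range n, (zLine R y - (k : ℂ))) * cpowR s (zLine R y) *
    Complex.exp (((σ2 : ℂ) / 2) * zLine R y * (zLine R y - 1) * ((T : ℂ) - (t : ℂ))) * pCoef l y

/-- The auxiliary function `Ã(t,s) = D₂ + D₁ − D₀`. -/
noncomputable def Atil (σ2 T R : ℝ) (l : ℝ → ℝ) (t s : ℝ) : ℂ :=
  cashGreek σ2 T R l 2 t s + cashGreek σ2 T R l 1 t s - cashGreek σ2 T R l 0 t s

/-- The auxiliary function `B̃(t,s) = D₃ + 3D₂`. -/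
noncomputable def Btil (σ2 T R : ℝ) (l : ℝ → ℝ) (t s : ℝ) : ℂ :=
  cashGreek σ2 T R l 3 t s + 3 * cashGreek σ2 T R l 2 t s

/-- The function `A(t,s)` from Theorem `errBSapprox`. -/
noncomputable def Afun (μ σ2 T R : ℝ) (l : ℝ → ℝ) (t s : ℝ) : ℂ :=
  if μ + σ2 / 2 = 0 then
    (((T - t : ℝ)) : ℂ) * (cashGreek σ2 T R l 3 t s + 3 * cashGreek σ2 T R l 2 t s)
  else
    (Atil σ2 T R l t (s * Real.exp ((μ + σ2 / 2) * (T - t))) - Atil σ2 T R l t s) /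
      (((μ + σ2 / 2 : ℝ)) : ℂ)

/-- The function `B(t,s)` from Theorem `errBSapprox`. -/
noncomputable def Bfun (μ σ2 T R : ℝ) (l : ℝ → ℝ) (t s : ℝ) : ℂ :=
  if μ + σ2 / 2 = 0 then
    (((T - t : ℝ)) : ℂ) * (cashGreek σ2 T R l 4 t s + 6 * cashGreek σ2 T R l 3 t s +
      6 * cashGreek σ2 T R l 2 t s)
  else
    (Btil σ2 T R l t (s * Real.exp ((μ + σ2 / 2) * (T - t))) - Btil σ2 T R l t s) /
      (((μ + σ2 / 2 : ℝ)) : ℂ)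

section

/-- A triple of functions meant to be a function of `lam` with its first two derivatives. -/
structure HJet (Ω : Type) where
  a : ℝ → Ω → ℂ
  b : ℝ → Ω → ℂ
  c : ℝ → Ω → ℂ

namespace HJet

variable {Ω X : Type}

/-- Jet independent of `lam`. -/
def const (f : Ω → ℂ) : HJet Ω := ⟨fun _ => f, fun _ _ => 0, fun _ _ => 0⟩

/-- Sum of jets. -/
def add (F G : HJet Ω) : HJet Ω :=
  ⟨fun l w => F.a l w + G.a l w, fun l w => F.b l w + G.b l w, fun l w => F.c l w + G.c l w⟩

/-- Difference of jets. -/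
def sub (F G : HJet Ω) : HJet Ω :=
  ⟨fun l w => F.a l w - G.a l w, fun l w => F.b l w - G.b l w, fun l w => F.c l w - G.c l w⟩

/-- Product of jets. -/
def mul (F G : HJet Ω) : HJet Ω :=
  ⟨fun l w => F.a l w * G.a l w, fun l w => F.b l w * G.a l w + F.a l w * G.b l w,
   fun l w => (F.c l w * G.a l w + F.b l w * G.b l w) + (F.b l w * G.b l w + F.a l w * G.c l w)⟩

/-- Exponential of a jet. -/
noncomputable def exp (F : HJet Ω) : HJet Ω :=
  ⟨fun l w => Complex.exp (F.a l w), fun l w => Complex.exp (F.a l w) * F.b l w,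
   fun l w => (Complex.exp (F.a l w) * F.b l w) * F.b l w + Complex.exp (F.a l w) * F.c l w⟩

/-- Integration of a jet over a parameter. -/
noncomputable def integ [MeasurableSpace X] (m : Measure X) (q : X → ℂ) (F : HJet (Ω × X)) :
    HJet Ω :=
  ⟨fun l w => ∫ x, F.a l (w, x) * q x ∂m, fun l w => ∫ x, F.b l (w, x) * q x ∂m,
   fun l w => ∫ x, F.c l (w, x) * q x ∂m⟩

/-- Pull back. -/
def comap {Ω' : Type} (φ : Ω' → Ω) (F : HJet Ω) : HJet Ω' :=
  ⟨fun l w => F.a l (φ w), fun l w => F.b l (φ w), fun l w => F.c l (φ w)⟩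

/-- Well-behaved jets. -/
structure Good [MeasurableSpace Ω] (U : Set ℝ) (A : Set Ω) (ρ : Ω → ℝ) (F : HJet Ω) : Prop where
  ma : ∀ l ∈ U, Measurable (F.a l)
  mb : ∀ l ∈ U, Measurable (F.b l)
  mc : ∀ l ∈ U, Measurable (F.c l)
  da : ∀ w ∈ A, ∀ l ∈ U, HasDerivAt (fun k => F.a k w) (F.b l w) l
  db : ∀ w ∈ A, ∀ l ∈ U, HasDerivAt (fun k => F.b k w) (F.c l w) l
  cc : ∀ w ∈ A, ContinuousOn (fun k => F.c k w) U
  bd : ∃ (C : ℝ) (N : ℕ), 0 ≤ C ∧ ∀ w ∈ A, ∀ l ∈ U, ‖F.a l w‖ ≤ C * ρ w ^ N ∧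
    ‖F.b l w‖ ≤ C * ρ w ^ N ∧ ‖F.c l w‖ ≤ C * ρ w ^ N

section
variable [MeasurableSpace Ω] [MeasurableSpace X] {U : Set ℝ} {A : Set Ω} {ρ : Ω → ℝ}
  {F G : HJet Ω}

theorem good_const {f : Ω → ℂ} (hf : Measurable f)
    (hb : ∃ (C : ℝ) (N : ℕ), 0 ≤ C ∧ ∀ w ∈ A, ‖f w‖ ≤ C * ρ w ^ N)
    (hρ : ∀ w ∈ A, 1 ≤ ρ w) : (const f).Good U A ρ := by
  obtain ⟨C, N, hC, hb⟩ := hb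
  refine ⟨fun _ _ => hf, fun _ _ => measurable_const, fun _ _ => measurable_const,
    fun w _ l _ => hasDerivAt_const _ _, fun w _ l _ => hasDerivAt_const _ _,
    fun w _ => continuousOn_const, C, N, hC, fun w hw l _ => ⟨hb w hw, ?_, ?_⟩⟩
  all_goals
    have := hρ w hw
    simp only [const, norm_zero]; positivity

theorem Good.add (hF : F.Good U A ρ) (hG : G.Good U A ρ) (hρ : ∀ w ∈ A, 1 ≤ ρ w) :
    (F.add G).Good U A ρ := by
  obtain ⟨C, N, hC, hb⟩ := hF.bd
  obtain ⟨C', N', hC', hb'⟩ := hG.bd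
  refine ⟨fun l hl => (hF.ma l hl).add (hG.ma l hl), fun l hl => (hF.mb l hl).add (hG.mb l hl),
    fun l hl => (hF.mc l hl).add (hG.mc l hl), fun w hw l hl => (hF.da w hw l hl).add
    (hG.da w hw l hl), fun w hw l hl => (hF.db w hw l hl).add (hG.db w hw l hl),
    fun w hw => (hF.cc w hw).add (hG.cc w hw), C + C', max N N', by positivity, ?_⟩
  intro w hw l hl
  have h1 := hρ w hw
  have e1 : ρ w ^ N ≤ ρ w ^ (max N N') := pow_le_pow_right₀ h1 (le_max_left _ _)
  have e2 : ρ w ^ N' ≤ ρ w ^ (max N N') := pow_le_pow_right₀ h1 (le_max_right _ _)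
  have e3 := mul_le_mul_of_nonneg_left e1 hC
  have e4 := mul_le_mul_of_nonneg_left e2 hC'
  obtain ⟨p1, p2, p3⟩ := hb w hw l hl
  obtain ⟨q1, q2, q3⟩ := hb' w hw l hl
  rw [add_mul]
  exact ⟨(norm_add_le _ _).trans (by linarith), (norm_add_le _ _).trans (by linarith),
    (norm_add_le _ _).trans (by linarith)⟩

theorem Good.sub (hF : F.Good U A ρ) (hG : G.Good U A ρ) (hρ : ∀ w ∈ A, 1 ≤ ρ w) :
    (F.sub G).Good U A ρ := by
  obtain ⟨C, N, hC, hb⟩ := hF.bd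
  obtain ⟨C', N', hC', hb'⟩ := hG.bd
  refine ⟨fun l hl => (hF.ma l hl).sub (hG.ma l hl), fun l hl => (hF.mb l hl).sub (hG.mb l hl),
    fun l hl => (hF.mc l hl).sub (hG.mc l hl), fun w hw l hl => (hF.da w hw l hl).sub
    (hG.da w hw l hl), fun w hw l hl => (hF.db w hw l hl).sub (hG.db w hw l hl),
    fun w hw => (hF.cc w hw).sub (hG.cc w hw), C + C', max N N', by positivity, ?_⟩
  intro w hw l hl
  have h1 := hρ w hw
  have e1 : ρ w ^ N ≤ ρ w ^ (max N N') := pow_le_pow_right₀ h1 (le_max_left _ _)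
  have e2 : ρ w ^ N' ≤ ρ w ^ (max N N') := pow_le_pow_right₀ h1 (le_max_right _ _)
  have e3 := mul_le_mul_of_nonneg_left e1 hC
  have e4 := mul_le_mul_of_nonneg_left e2 hC'
  obtain ⟨p1, p2, p3⟩ := hb w hw l hl
  obtain ⟨q1, q2, q3⟩ := hb' w hw l hl
  rw [add_mul]
  exact ⟨(norm_sub_le _ _).trans (by linarith), (norm_sub_le _ _).trans (by linarith),
    (norm_sub_le _ _).trans (by linarith)⟩

theorem norm_mul_le_aux {x y : ℂ} {p q : ℝ} (hx : ‖x‖ ≤ p) (hy : ‖y‖ ≤ q) : ‖x * y‖ ≤ p * q := by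
  rw [norm_mul]
  exact mul_le_mul hx hy (norm_nonneg _) ((norm_nonneg _).trans hx)

theorem Good.mul (hF : F.Good U A ρ) (hG : G.Good U A ρ) (hρ : ∀ w ∈ A, 1 ≤ ρ w) :
    (F.mul G).Good U A ρ := by
  obtain ⟨C, N, hC, hb⟩ := hF.bd
  obtain ⟨C', N', hC', hb'⟩ := hG.bd
  have m1 : ∀ w ∈ A, ∀ l ∈ U, HasDerivAt (fun k => (F.mul G).a k w) ((F.mul G).b l w) l :=
    fun w hw l hl => (hF.da w hw l hl).mul (hG.da w hw l hl)
  have m2 : ∀ w ∈ A, ∀ l ∈ U, HasDerivAt (fun k => (F.mul G).b k w) ((F.mul G).c l w) l :=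
    fun w hw l hl => ((hF.db w hw l hl).mul (hG.da w hw l hl)).add
      ((hF.da w hw l hl).mul (hG.db w hw l hl))
  refine ⟨fun l hl => (hF.ma l hl).mul (hG.ma l hl), fun l hl => ((hF.mb l hl).mul (hG.ma l hl)).add
    ((hF.ma l hl).mul (hG.mb l hl)),
    fun l hl => (((hF.mc l hl).mul (hG.ma l hl)).add ((hF.mb l hl).mul (hG.mb l hl))).add
      (((hF.mb l hl).mul (hG.mb l hl)).add ((hF.ma l hl).mul (hG.mc l hl))),
    m1, m2, ?_, 4 * (C * C'), N + N', by positivity, ?_⟩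
  · intro w hw
    have a1 : ContinuousOn (fun k => F.a k w) U := fun l hl =>
      (hF.da w hw l hl).continuousAt.continuousWithinAt
    have a2 : ContinuousOn (fun k => F.b k w) U := fun l hl =>
      (hF.db w hw l hl).continuousAt.continuousWithinAt
    have b1 : ContinuousOn (fun k => G.a k w) U := fun l hl =>
      (hG.da w hw l hl).continuousAt.continuousWithinAt
    have b2 : ContinuousOn (fun k => G.b k w) U := fun l hl =>
      (hG.db w hw l hl).continuousAt.continuousWithinAt
    exact (((hF.cc w hw).mul b1).add (a2.mul b2)).add ((a2.mul b2).add (a1.mul (hG.cc w hw)))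
  intro w hw l hl
  have h1 := hρ w hw
  obtain ⟨p1, p2, p3⟩ := hb w hw l hl
  obtain ⟨q1, q2, q3⟩ := hb' w hw l hl
  have e : 4 * (C * C') * ρ w ^ (N + N') = 4 * ((C * ρ w ^ N) * (C' * ρ w ^ N')) := by ring
  have e0 : 0 ≤ (C * ρ w ^ N) * (C' * ρ w ^ N') := by positivity
  rw [e]
  refine ⟨(norm_mul_le_aux p1 q1).trans (by linarith), ?_, ?_⟩
  · refine (norm_add_le _ _).trans ?_
    linarith [norm_mul_le_aux p2 q1, norm_mul_le_aux p1 q2]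
  · refine (norm_add_le _ _).trans ?_
    have r1 := norm_add_le (F.c l w * G.a l w) (F.b l w * G.b l w)
    have r2 := norm_add_le (F.b l w * G.b l w) (F.a l w * G.c l w)
    linarith [norm_mul_le_aux p3 q1, norm_mul_le_aux p2 q2, norm_mul_le_aux p1 q3]

theorem Good.exp (hF : F.Good U A ρ) (hρ : ∀ w ∈ A, 1 ≤ ρ w)
    (hre : ∃ B : ℝ, ∀ w ∈ A, ∀ l ∈ U, (F.a l w).re ≤ B) :
    F.exp.Good U A ρ := by
  obtain ⟨C, N, hC, hb⟩ := hF.bd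
  obtain ⟨B, hB⟩ := hre
  have m1 : ∀ w ∈ A, ∀ l ∈ U, HasDerivAt (fun k => F.exp.a k w) (F.exp.b l w) l :=
    fun w hw l hl => (hF.da w hw l hl).cexp
  have m2 : ∀ w ∈ A, ∀ l ∈ U, HasDerivAt (fun k => F.exp.b k w) (F.exp.c l w) l :=
    fun w hw l hl => ((hF.da w hw l hl).cexp).mul (hF.db w hw l hl)
  refine ⟨fun l hl => (hF.ma l hl).cexp, fun l hl => (hF.ma l hl).cexp.mul (hF.mb l hl),
    fun l hl => ((hF.ma l hl).cexp.mul (hF.mb l hl)).mul (hF.mb l hl) |>.add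
      ((hF.ma l hl).cexp.mul (hF.mc l hl)),
    m1, m2, ?_, Real.exp B * (1 + C + C * C), N + N, by positivity, ?_⟩
  · intro w hw
    have a0 : ContinuousOn (fun k => F.exp.a k w) U := fun l hl =>
      (m1 w hw l hl).continuousAt.continuousWithinAt
    have a2 : ContinuousOn (fun k => F.b k w) U := fun l hl =>
      (hF.db w hw l hl).continuousAt.continuousWithinAt
    exact ((a0.mul a2).mul a2).add (a0.mul (hF.cc w hw))
  intro w hw l hl
  have h1 := hρ w hw
  obtain ⟨p1, p2, p3⟩ := hb w hw l hl
  have hE : ‖Complex.exp (F.a l w)‖ ≤ Real.exp B := by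
    rw [Complex.norm_exp]; exact Real.exp_le_exp.2 (hB w hw l hl)
  have k1 : (1 : ℝ) ≤ ρ w ^ N := one_le_pow₀ h1
  have k2 : ρ w ^ N ≤ ρ w ^ (N + N) := pow_le_pow_right₀ h1 (by omega)
  have k3 : (C * ρ w ^ N) * (C * ρ w ^ N) = C * C * ρ w ^ (N + N) := by ring
  have k4 : C * ρ w ^ N ≤ C * ρ w ^ (N + N) := mul_le_mul_of_nonneg_left k2 hC
  have k5 : 0 ≤ C * ρ w ^ (N + N) := by positivity
  have k6 : 0 ≤ C * C * ρ w ^ (N + N) := by positivity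
  have eB := (Real.exp_pos B).le
  have g1 := norm_mul_le_aux hE p2
  have g2 := norm_mul_le_aux g1 p2
  have g3 := norm_mul_le_aux hE p3
  refine ⟨hE.trans ?_, g1.trans ?_, (norm_add_le _ _).trans ((add_le_add g2 g3).trans ?_)⟩
  · rw [mul_assoc]; apply le_mul_of_one_le_right eB; nlinarith
  · rw [mul_assoc]; apply mul_le_mul_of_nonneg_left _ eB; nlinarith
  · rw [mul_assoc, k3, ← mul_add, mul_assoc (Real.exp B) (1 + C + C * C)]
    apply mul_le_mul_of_nonneg_left _ eB; nlinarith

theorem Good.comap {Ω' : Type} [MeasurableSpace Ω'] {A' : Set Ω'} {ρ' : Ω' → ℝ} {φ : Ω' → Ω}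
    (hF : F.Good U A ρ) (hφ : Measurable φ) (hA : ∀ w ∈ A', φ w ∈ A)
    (hr : ∀ w ∈ A', ρ (φ w) = ρ' w) : (F.comap φ).Good U A' ρ' := by
  obtain ⟨C, N, hC, hb⟩ := hF.bd
  refine ⟨fun l hl => (hF.ma l hl).comp hφ, fun l hl => (hF.mb l hl).comp hφ,
    fun l hl => (hF.mc l hl).comp hφ, fun w hw => hF.da _ (hA w hw), fun w hw => hF.db _ (hA w hw),
    fun w hw => hF.cc _ (hA w hw), C, N, hC, fun w hw l hl => ?_⟩
  rw [← hr w hw]; exact hb _ (hA w hw) l hl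

theorem Good.integ {m : Measure X} [SFinite m] {q : X → ℂ} {r : X → ℝ} {F : HJet (Ω × X)}
    {A₂ : Set (Ω × X)} {ρ₂ : Ω × X → ℝ} (hU : IsOpen U)
    (hF : F.Good U A₂ ρ₂) (hq : Measurable q) (hρ : ∀ w ∈ A, 1 ≤ ρ w)
    (hA : ∀ w ∈ A, ∀ᵐ x ∂m, (w, x) ∈ A₂ ∧ ρ₂ (w, x) = ρ w * r x)
    (hr : ∀ N : ℕ, Integrable (fun x => r x ^ N * ‖q x‖) m) :
    (HJet.integ m q F).Good U A ρ := by
  obtain ⟨C, N, hC, hb⟩ := hF.bd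
  set bnd : Ω → X → ℝ := fun w x => C * ρ w ^ N * (r x ^ N * ‖q x‖) with hbnd
  have ibnd : ∀ w, Integrable (bnd w) m := fun w => (hr N).const_mul _
  have mea : ∀ H : ℝ → Ω × X → ℂ, (∀ l ∈ U, Measurable (H l)) → ∀ w, ∀ l ∈ U,
      AEStronglyMeasurable (fun x => H l (w, x) * q x) m := fun H hH w l hl =>
    (((hH l hl).comp measurable_prodMk_left).mul hq).aestronglyMeasurable
  have bdd : ∀ w ∈ A, ∀ᵐ x ∂m, ∀ l ∈ U, ‖F.a l (w, x) * q x‖ ≤ bnd w x ∧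
      ‖F.b l (w, x) * q x‖ ≤ bnd w x ∧ ‖F.c l (w, x) * q x‖ ≤ bnd w x := by
    intro w hw
    filter_upwards [hA w hw] with x hx l hl
    obtain ⟨b1, b2, b3⟩ := hb (w, x) hx.1 l hl
    have e : bnd w x = C * ρ₂ (w, x) ^ N * ‖q x‖ := by
      rw [hx.2, hbnd, mul_pow]; ring
    rw [e]
    exact ⟨norm_mul_le_aux b1 le_rfl, norm_mul_le_aux b2 le_rfl, norm_mul_le_aux b3 le_rfl⟩
  have mm : ∀ H : ℝ → Ω × X → ℂ, (∀ l ∈ U, Measurable (H l)) → ∀ l ∈ U,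
      Measurable (fun w => ∫ x, H l (w, x) * q x ∂m) := by
    intro H hH l hl
    have : StronglyMeasurable (fun z : Ω × X => H l z * q z.2) :=
      ((hH l hl).mul (hq.comp measurable_snd)).stronglyMeasurable
    exact this.integral_prod_right'.measurable
  refine ⟨mm _ hF.ma, mm _ hF.mb, mm _ hF.mc, ?_, ?_, ?_, ?_⟩
  · intro w hw l hl
    refine (hasDerivAt_integral_of_dominated_loc_of_deriv_le (F := fun k x => F.a k (w, x) * q x)
      (F' := fun k x => F.b k (w, x) * q x) (hU.mem_nhds hl) ?_ ?_ (mea _ hF.mb w l hl)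
      ?_ (ibnd w) ?_).2
    · filter_upwards [hU.mem_nhds hl] with k hk using mea _ hF.ma w k hk
    · refine (ibnd w).mono' (mea _ hF.ma w l hl) ?_
      filter_upwards [bdd w hw] with x hx using (hx l hl).1
    · filter_upwards [bdd w hw] with x hx k hk using (hx k hk).2.1
    · filter_upwards [hA w hw] with x hx k hk using (hF.da _ hx.1 k hk).mul_const _
  · intro w hw l hl
    refine (hasDerivAt_integral_of_dominated_loc_of_deriv_le (F := fun k x => F.b k (w, x) * q x)
      (F' := fun k x => F.c k (w, x) * q x) (hU.mem_nhds hl) ?_ ?_ (mea _ hF.mc w l hl)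
      ?_ (ibnd w) ?_).2
    · filter_upwards [hU.mem_nhds hl] with k hk using mea _ hF.mb w k hk
    · refine (ibnd w).mono' (mea _ hF.mb w l hl) ?_
      filter_upwards [bdd w hw] with x hx using (hx l hl).2.1
    · filter_upwards [bdd w hw] with x hx k hk using (hx k hk).2.2
    · filter_upwards [hA w hw] with x hx k hk using (hF.db _ hx.1 k hk).mul_const _
  · intro w hw
    refine continuousOn_of_dominated (F := fun k x => F.c k (w, x) * q x) (bound := bnd w)
      (fun k hk => mea _ hF.mc w k hk) (fun k hk => ?_) (ibnd w) ?_
    · filter_upwards [bdd w hw] with x hx using (hx k hk).2.2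
    · filter_upwards [hA w hw] with x hx using (hF.cc _ hx.1).mul continuousOn_const
  · refine ⟨C * |∫ x, r x ^ N * ‖q x‖ ∂m|, N, by positivity, fun w hw l hl => ?_⟩
    have key : ∫ x, bnd w x ∂m ≤ C * |∫ x, r x ^ N * ‖q x‖ ∂m| * ρ w ^ N := by
      rw [hbnd]; simp only []
      rw [integral_const_mul]
      have := hρ w hw
      have h3 : 0 ≤ C * ρ w ^ N := by positivity
      calc _ ≤ C * ρ w ^ N * |∫ x, r x ^ N * ‖q x‖ ∂m| :=
            mul_le_mul_of_nonneg_left (le_abs_self _) h3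
        _ = _ := by ring
    refine ⟨le_trans (norm_integral_le_of_norm_le (ibnd w) ?_) key,
      le_trans (norm_integral_le_of_norm_le (ibnd w) ?_) key,
      le_trans (norm_integral_le_of_norm_le (ibnd w) ?_) key⟩
    · filter_upwards [bdd w hw] with x hx using (hx l hl).1
    · filter_upwards [bdd w hw] with x hx using (hx l hl).2.1
    · filter_upwards [bdd w hw] with x hx using (hx l hl).2.2

/-- A good jet gives a `C²` function. -/
theorem Good.contDiffOn (hF : F.Good U A ρ) (hU : IsOpen U) {w : Ω} (hw : w ∈ A) :
    ContDiffOn ℝ 2 (fun l => F.a l w) U ∧ (∀ l ∈ U, deriv (fun l => F.a l w) l = F.b l w) ∧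
    (∀ l ∈ U, iteratedDeriv 2 (fun l => F.a l w) l = F.c l w) := by
  have h1 : ∀ l ∈ U, deriv (fun l => F.a l w) l = F.b l w := fun l hl => (hF.da w hw l hl).deriv
  have h2 : ∀ l ∈ U, deriv (deriv (fun l => F.a l w)) l = F.c l w := by
    intro l hl
    have : deriv (fun l => F.a l w) =ᶠ[nhds l] fun l => F.b l w := by
      filter_upwards [hU.mem_nhds hl] with k hk using h1 k hk
    rw [this.deriv_eq]; exact (hF.db w hw l hl).deriv
  refine ⟨?_, h1, ?_⟩
  · rw [show (2 : WithTop ℕ∞) = 1 + 1 by norm_num, contDiffOn_succ_iff_deriv_of_isOpen hU]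
    refine ⟨fun l hl => (hF.da w hw l hl).differentiableAt.differentiableWithinAt, by simp, ?_⟩
    rw [show (1 : WithTop ℕ∞) = 0 + 1 by norm_num, contDiffOn_succ_iff_deriv_of_isOpen hU]
    refine ⟨fun l hl => ?_, by simp, ?_⟩
    · exact (((hF.db w hw l hl).differentiableAt.differentiableWithinAt)).congr h1 (h1 l hl)
    · rw [contDiffOn_zero]
      exact (hF.cc w hw).congr h2
  · intro l hl
    rw [iteratedDeriv_succ, iteratedDeriv_one]; exact h2 l hl

end
end HJet

end

section

/-- The finite measure `x² K(dx)`. -/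
noncomputable def lkM (K : Measure ℝ) : Measure ℝ := K.withDensity fun x => ENNReal.ofReal (x ^ 2)

/-- The measure `(1-s) ds` on `(0,1]`. -/
noncomputable def lkW : Measure ℝ :=
  (volume.restrict (Ioc (0:ℝ) 1)).withDensity fun s => ENNReal.ofReal (1 - s)

theorem lk_integrable_sq_exp (K : Measure ℝ)
    (hKmin : ∫⁻ x : ℝ, ENNReal.ofReal (min 1 (x ^ 2)) ∂K ≠ ⊤) (a b : ℝ)
    (hKexp : ∀ s ∈ Set.Ioo a b,
      ∫⁻ x in {x : ℝ | 1 ≤ |x|}, ENNReal.ofReal (Real.exp (s * x)) ∂K ≠ ⊤) (r : ℝ)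
    (hr : r ∈ Ioo a b) : Integrable (fun x : ℝ => x ^ 2 * Real.exp (r * x)) K := by
  have hS : MeasurableSet {x : ℝ | 1 ≤ |x|} := measurableSet_le measurable_const measurable_norm
  have h1 : IntegrableOn (fun x : ℝ => x ^ 2 * Real.exp (r * x)) {x : ℝ | 1 ≤ |x|} K := by
    have hsub : Ioo a b ⊆ integrableExpSet id (K.restrict {x : ℝ | 1 ≤ |x|}) := by
      intro s hs
      refine ⟨(by fun_prop), ?_⟩
      rw [hasFiniteIntegral_iff_ofReal (Filter.Eventually.of_forall fun x => (Real.exp_pos _).le)]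
      exact lt_top_iff_ne_top.2 (hKexp s hs)
    have := integrable_pow_mul_exp_of_mem_interior_integrableExpSet
      (interior_maximal hsub isOpen_Ioo hr) 2
    exact this
  have hmin : Integrable (fun x : ℝ => min 1 (x ^ 2)) K := by
    refine ⟨(by fun_prop), ?_⟩
    rw [hasFiniteIntegral_iff_ofReal (Filter.Eventually.of_forall fun x => ?_)]
    · exact lt_top_iff_ne_top.2 hKmin
    · show (0:ℝ) ≤ min 1 (x ^ 2)
      positivity
  have h2 : IntegrableOn (fun x : ℝ => x ^ 2 * Real.exp (r * x)) {x : ℝ | 1 ≤ |x|}ᶜ K := by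
    refine ((hmin.integrableOn (s := {x : ℝ | 1 ≤ |x|}ᶜ)).const_mul (Real.exp |r|)).mono'
      (by fun_prop) ?_
    refine (ae_restrict_iff' hS.compl).2 (Filter.Eventually.of_forall fun x hx => ?_)
    have hx' : |x| < 1 := by simpa using hx
    have hx2 : x ^ 2 ≤ 1 := by rw [← sq_abs]; exact pow_le_one₀ (abs_nonneg _) hx'.le
    rw [Real.norm_of_nonneg (by positivity), min_eq_right hx2, mul_comm]
    refine mul_le_mul_of_nonneg_right (Real.exp_le_exp.2 ?_) (sq_nonneg x)
    calc r * x ≤ |r * x| := le_abs_self _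
      _ = |r| * |x| := abs_mul _ _
      _ ≤ |r| * 1 := by gcongr
      _ = _ := mul_one _
  have := h1.union h2
  rwa [union_compl_self, integrableOn_univ] at this

theorem lkM_integral (K : Measure ℝ) (g : ℝ → ℂ) :
    ∫ x, g x ∂(lkM K) = ∫ x, ((x : ℂ) ^ 2) * g x ∂K := by
  rw [lkM, integral_withDensity_eq_integral_toReal_smul (by fun_prop) (by simp)]
  congr 1; ext x
  rw [ENNReal.toReal_ofReal (sq_nonneg x), Complex.real_smul]; push_cast; rfl

theorem lkM_exp (K : Measure ℝ)
    (hKmin : ∫⁻ x : ℝ, ENNReal.ofReal (min 1 (x ^ 2)) ∂K ≠ ⊤) (a b : ℝ)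
    (hKexp : ∀ s ∈ Set.Ioo a b,
      ∫⁻ x in {x : ℝ | 1 ≤ |x|}, ENNReal.ofReal (Real.exp (s * x)) ∂K ≠ ⊤) (r : ℝ)
    (hr : r ∈ Ioo a b) : Integrable (fun x : ℝ => Real.exp (r * x)) (lkM K) := by
  rw [lkM, integrable_withDensity_iff_integrable_smul' (by fun_prop) (by simp)]
  refine (lk_integrable_sq_exp K hKmin a b hKexp r hr).congr ?_
  refine Filter.Eventually.of_forall fun x => ?_
  simp only [smul_eq_mul]
  rw [ENNReal.toReal_ofReal (sq_nonneg x)]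

instance lkW_finite : IsFiniteMeasure lkW := by
  refine isFiniteMeasure_withDensity ?_
  refine ne_top_of_le_ne_top (b := ∫⁻ x in Ioc (0:ℝ) 1, 1) (by simp) ?_
  refine setLIntegral_mono measurable_const fun x hx => ?_
  rw [← ENNReal.ofReal_one]
  exact ENNReal.ofReal_le_ofReal (by linarith [hx.1])

theorem lkW_ae : ∀ᵐ s ∂lkW, s ∈ Ioc (0:ℝ) 1 :=
  (withDensity_absolutelyContinuous _ _).ae_le (ae_restrict_mem measurableSet_Ioc)

theorem lkW_integral (g : ℝ → ℂ) :
    ∫ s, g s ∂lkW = ∫ s in (0:ℝ)..1, (1 - (s:ℂ)) * g s := by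
  rw [lkW, integral_withDensity_eq_integral_toReal_smul (by fun_prop) (by simp),
    intervalIntegral.integral_of_le zero_le_one]
  refine setIntegral_congr_fun measurableSet_Ioc fun s hs => ?_
  rw [ENNReal.toReal_ofReal (by linarith [hs.2]), Complex.real_smul]; push_cast; rfl

/-- The measure with `κ(λ,z) = μ z + z² ∫ e^{λ z x} ν(dx)`. -/
noncomputable def lkNu (c : ℝ) (K : Measure ℝ) : Measure ℝ :=
  Measure.map (fun p : ℝ × ℝ => p.1 * p.2) (lkW.prod (lkM K)) +
    ENNReal.ofReal (c / 2) • Measure.dirac 0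

theorem exp_le_one_add {s t : ℝ} (hs : s ∈ Ioc (0:ℝ) 1) : Real.exp (s * t) ≤ 1 + Real.exp t := by
  rcases le_total t 0 with h | h
  · have : Real.exp (s * t) ≤ 1 := Real.exp_le_one_iff.2 (by nlinarith [hs.1])
    linarith [Real.exp_pos t]
  · have : Real.exp (s * t) ≤ Real.exp t := Real.exp_le_exp.2 (by nlinarith [hs.2])
    linarith

theorem taylor_kernel (w : ℂ) :
    w ^ 2 * ∫ s in (0:ℝ)..1, (1 - (s:ℂ)) * Complex.exp (s * w) = Complex.exp w - 1 - w := by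
  rw [← intervalIntegral.integral_const_mul]
  have hd : ∀ s ∈ uIcc (0:ℝ) 1, HasDerivAt (fun s : ℝ => ((1 - (s:ℂ)) * w + 1) * Complex.exp (s * w))
      (w ^ 2 * ((1 - (s:ℂ)) * Complex.exp (s * w))) s := by
    intro s _
    have h1 : HasDerivAt (fun s : ℝ => (s : ℂ)) 1 s := Complex.ofRealCLM.hasDerivAt
    have h2 := ((((h1.const_sub 1).mul_const w).add_const 1).mul ((h1.mul_const w).cexp))
    refine h2.congr_deriv ?_
    ring
  rw [intervalIntegral.integral_eq_sub_of_hasDerivAt hd]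
  · simp; ring
  · apply Continuous.intervalIntegrable; fun_prop

section
variable (μ c : ℝ) (hc : 0 ≤ c) (K : MeasureTheory.Measure ℝ)
    (hKmin : ∫⁻ x : ℝ, ENNReal.ofReal (min 1 (x ^ 2)) ∂K ≠ ⊤)
    (a b : ℝ) (h0 : (0 : ℝ) ∈ Set.Ioo a b)
    (hKexp : ∀ s ∈ Set.Ioo a b,
      ∫⁻ x in {x : ℝ | 1 ≤ |x|}, ENNReal.ofReal (Real.exp (s * x)) ∂K ≠ ⊤)
include hKmin h0 hKexp

theorem lkM_finite : IsFiniteMeasure (lkM K) := by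
  have := lkM_exp K hKmin a b hKexp 0 h0
  simp only [zero_mul, Real.exp_zero] at this
  rw [integrable_const_iff] at this
  simpa using this

theorem lkNu_prod_exp (r : ℝ) (hr : r ∈ Ioo a b) :
    Integrable (fun p : ℝ × ℝ => Real.exp (r * (p.1 * p.2))) (lkW.prod (lkM K)) := by
  have := lkM_finite K hKmin a b h0 hKexp
  have h1 : Integrable (fun p : ℝ × ℝ => 1 + Real.exp (r * p.2)) (lkW.prod (lkM K)) :=
    (integrable_const _).add ((lkM_exp K hKmin a b hKexp r hr).comp_snd lkW)
  refine h1.mono' (by fun_prop) ?_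
  have h2 : ∀ᵐ p ∂(lkW.prod (lkM K)), p.1 ∈ Ioc (0:ℝ) 1 :=
    Measure.quasiMeasurePreserving_fst.ae lkW_ae
  filter_upwards [h2] with p hp
  rw [Real.norm_of_nonneg (Real.exp_pos _).le, show r * (p.1 * p.2) = p.1 * (r * p.2) by ring]
  exact exp_le_one_add hp

theorem lkNu_exp : Ioo a b ⊆ integrableExpSet id (lkNu c K) := by
  intro r hr
  have := lkM_finite K hKmin a b h0 hKexp
  show Integrable _ (lkNu c K)
  rw [lkNu, integrable_add_measure]
  constructor
  · rw [integrable_map_measure (by fun_prop) (by fun_prop)]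
    exact lkNu_prod_exp K hKmin a b h0 hKexp r hr
  · exact (integrable_dirac (by simp)).smul_measure (by simp)

theorem lkNu_finite : IsFiniteMeasure (lkNu c K) := by
  have := lkM_finite K hKmin a b h0 hKexp
  unfold lkNu
  have : IsFiniteMeasure (ENNReal.ofReal (c / 2) • Measure.dirac (0:ℝ)) :=
    Measure.smul_finite _ (by simp)
  infer_instance

/-- Moments of `ν`. -/
theorem lkNu_integral (hc : 0 ≤ c) (n : ℕ) (w : ℂ) (hw : w.re ∈ Ioo a b) :
    ∫ x : ℝ, (x : ℂ) ^ n * Complex.exp (w * x) ∂(lkNu c K) =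
      (∫ x : ℝ, ((x : ℂ) ^ 2) * (∫ s in (0:ℝ)..1, (1 - (s:ℂ)) *
        (((s:ℂ) * x) ^ n * Complex.exp (w * ((s:ℂ) * x)))) ∂K) + (c / 2 : ℂ) * 0 ^ n := by
  have := lkM_finite K hKmin a b h0 hKexp
  have hintg : Integrable (fun x : ℝ => (x : ℂ) ^ n * Complex.exp (w * x)) (lkNu c K) :=
    integrable_pow_mul_cexp_of_re_mem_interior_integrableExpSet (X := id)
      (interior_maximal (lkNu_exp c K hKmin a b h0 hKexp) isOpen_Ioo hw) n
  rw [lkNu, integrable_add_measure] at hintg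
  rw [lkNu, integral_add_measure hintg.1 hintg.2, integral_smul_measure, integral_dirac,
    integral_map (by fun_prop) (by fun_prop)]
  have h1 := hintg.1
  rw [integrable_map_measure (by fun_prop) (by fun_prop)] at h1
  have h2 := integral_prod_symm _ h1
  simp only [Function.comp] at h2
  rw [h2, lkM_integral]
  congr 1
  · congr 1; ext x
    rw [lkW_integral]
    congr 2; ext s; push_cast; ring
  · rw [ENNReal.toReal_ofReal (by positivity), Complex.real_smul]
    simp

theorem kappa_eq_nu (hc : 0 ≤ c) (lam : ℝ) (z : ℂ) (hz : lam * z.re ∈ Ioo a b) :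
    kappa μ c K lam z = μ * z + z ^ 2 * ∫ x : ℝ, (x : ℂ) ^ 0 * Complex.exp (lam * z * x) ∂(lkNu c K) := by
  rw [lkNu_integral c K hKmin a b h0 hKexp hc 0 _ (by simpa using hz), kappa]
  split_ifs with h
  · subst h
    have e : ∫ s in (0:ℝ)..1, (1 - (s:ℂ)) = 1 / 2 := by
      rw [intervalIntegral.integral_sub (by simp) (Continuous.intervalIntegrable (by fun_prop) _ _)]
      rw [intervalIntegral.integral_ofReal]; simp; norm_num
    simp only [pow_zero, ofReal_zero, zero_mul, Complex.exp_zero, mul_one, e]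
    rw [integral_mul_const]
    have : ∫ x : ℝ, ((x:ℂ) ^ 2) ∂K = ((∫ x : ℝ, x ^ 2 ∂K : ℝ) : ℂ) := by
      rw [← integral_complex_ofReal]; congr 1; ext x; push_cast; rfl
    rw [this]; push_cast; ring
  · have hl : (lam : ℂ) ≠ 0 := by exact_mod_cast h
    simp only [pow_zero, one_mul, mul_one]
    have e : ∀ x : ℝ, (Complex.exp ((lam : ℂ) * z * (x : ℂ)) - 1 - (lam : ℂ) * z * (x : ℂ)) =
        ((lam:ℂ) ^ 2 * z ^ 2) * ((x:ℂ) ^ 2 * (∫ s in (0:ℝ)..1, (1 - (s:ℂ)) * Complex.exp (lam * z * (s * x)))) := by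
      intro x
      rw [← taylor_kernel]
      have : ∀ s : ℝ, (lam * z * (s * x) : ℂ) = s * (lam * z * x) := fun s => by ring
      simp only [this]; ring
    simp only [e]
    rw [integral_const_mul]
    field_simp
    ring

theorem kappa_integrable (w : ℂ) (hw : w.re ∈ Ioo a b) :
    Integrable (fun x : ℝ => Complex.exp (w * x) - 1 - w * x) K := by
  have h1 := lk_integrable_sq_exp K hKmin a b hKexp _ hw
  have h2 := lk_integrable_sq_exp K hKmin a b hKexp _ h0
  refine ((h2.add h1).const_mul (‖w‖ ^ 2)).mono' (by fun_prop) (Filter.Eventually.of_forall fun x => ?_)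
  rw [← taylor_kernel, norm_mul]
  have hb : ‖∫ s in (0:ℝ)..1, (1 - (s:ℂ)) * Complex.exp (s * (w * x))‖ ≤ 1 + Real.exp (w.re * x) := by
    refine (intervalIntegral.norm_integral_le_of_norm_le_const
      (C := 1 + Real.exp (w.re * x)) fun s hs => ?_).trans (by simp)
    rw [uIoc_of_le zero_le_one] at hs
    have : ‖(1 - (s:ℂ))‖ ≤ 1 := by
      rw [← ofReal_one, ← ofReal_sub, norm_real, Real.norm_eq_abs, abs_le]
      constructor <;> linarith [hs.1, hs.2]
    rw [norm_mul, Complex.norm_exp]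
    have e : ((s:ℂ) * (w * x)).re = s * (w.re * x) := by simp
    rw [e]
    calc _ ≤ 1 * Real.exp (s * (w.re * x)) := by gcongr
      _ ≤ _ := by rw [one_mul]; exact exp_le_one_add hs
  calc _ ≤ ‖(w * x) ^ 2‖ * (1 + Real.exp (w.re * x)) := by gcongr
    _ = _ := by
      simp [mul_pow, Complex.norm_real]; ring

theorem kappa_re_le (hc : 0 ≤ c) (lam : ℝ) (z : ℂ) (hz : lam * z.re ∈ Ioo a b) :
    (kappa μ c K lam z).re ≤ (kappa μ c K lam (z.re : ℂ)).re := by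
  have hsq : (z ^ 2).re ≤ (((z.re : ℝ) : ℂ) ^ 2).re := by
    simp only [sq, mul_re, ofReal_re, ofReal_im]; nlinarith [mul_self_nonneg z.im]
  rw [kappa, kappa]
  split_ifs with h
  · have hS : 0 ≤ c + ∫ x : ℝ, x ^ 2 ∂K := add_nonneg hc (integral_nonneg fun x => sq_nonneg x)
    rw [← ofReal_ofNat, ← ofReal_div, add_re, add_re, re_ofReal_mul, re_ofReal_mul, re_ofReal_mul,
      re_ofReal_mul]
    have := mul_le_mul_of_nonneg_left hsq (div_nonneg hS zero_le_two)
    simp only [ofReal_re]; linarith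
  · have i1 := kappa_integrable K hKmin a b h0 hKexp (lam * z) (by simpa using hz)
    have i2 := kappa_integrable K hKmin a b h0 hKexp (lam * (z.re : ℂ)) (by simpa using hz)
    have hI : (∫ x : ℝ, (Complex.exp ((lam : ℂ) * z * (x : ℂ)) - 1 - (lam : ℂ) * z * (x : ℂ)) ∂K).re ≤
        (∫ x : ℝ, (Complex.exp ((lam : ℂ) * (z.re:ℂ) * (x : ℂ)) - 1 - (lam : ℂ) * (z.re:ℂ) * (x : ℂ)) ∂K).re := by
      have r1 := Complex.reCLM.integral_comp_comm i1
      have r2 := Complex.reCLM.integral_comp_comm i2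
      simp only [reCLM_apply] at r1 r2
      rw [← r1, ← r2]
      refine integral_mono i1.re i2.re fun x => ?_
      have e1 : ((lam:ℂ) * z * x).re = ((lam:ℂ) * (z.re:ℂ) * x).re := by simp
      have e2 : ((lam:ℂ) * (z.re:ℂ) * x).im = 0 := by simp
      simp only [sub_re, one_re, Complex.exp_re]
      rw [e1, e2, Real.cos_zero]
      have := mul_le_mul_of_nonneg_left (Real.cos_le_one ((lam:ℂ) * z * x).im)
        (Real.exp_pos ((lam:ℂ) * (z.re:ℂ) * x).re).le
      linarith
    rw [← ofReal_ofNat, ← ofReal_div, ← ofReal_pow, ← ofReal_inv]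
    simp only [add_re, re_ofReal_mul]
    have := mul_le_mul_of_nonneg_left hsq (div_nonneg hc zero_le_two)
    have h4 := mul_le_mul_of_nonneg_left hI (inv_nonneg.2 (sq_nonneg lam))
    simp only [ofReal_re]; linarith

theorem lkNu_mom1 (hc : 0 ≤ c) : ∫ x : ℝ, (x : ℂ) ^ 1 * Complex.exp (0 * x) ∂(lkNu c K) =
    ((∫ x : ℝ, x ^ 3 ∂K : ℝ) : ℂ) / 6 := by
  rw [lkNu_integral c K hKmin a b h0 hKexp hc 1 0 (by simpa using h0)]
  have e : ∫ s in (0:ℝ)..1, (1 - s) * s = 1 / 6 := by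
    have : ∀ s : ℝ, (1 - s) * s = s - s ^ 2 := fun s => by ring
    simp only [this]
    rw [intervalIntegral.integral_sub (by simp) (by simp)]
    simp; norm_num
  have e' : ∀ x : ℝ, (x : ℂ) ^ 2 * ∫ s in (0:ℝ)..1, (1 - (s:ℂ)) *
      (((s:ℂ) * x) ^ 1 * Complex.exp (0 * ((s:ℂ) * x))) = ((x ^ 3 : ℝ) : ℂ) * (1 / 6) := by
    intro x
    have : ∀ s : ℝ, (1 - (s:ℂ)) * (((s:ℂ) * x) ^ 1 * Complex.exp (0 * ((s:ℂ) * x))) =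
      (((1 - s) * s : ℝ) : ℂ) * x := fun s => by simp; ring
    simp only [this]
    rw [intervalIntegral.integral_mul_const, intervalIntegral.integral_ofReal, e]
    push_cast; ring
  simp only [e']
  rw [integral_mul_const, integral_complex_ofReal]; simp; ring

theorem lkNu_mom2 (hc : 0 ≤ c) : ∫ x : ℝ, (x : ℂ) ^ 2 * Complex.exp (0 * x) ∂(lkNu c K) =
    ((∫ x : ℝ, x ^ 4 ∂K : ℝ) : ℂ) / 12 := by
  rw [lkNu_integral c K hKmin a b h0 hKexp hc 2 0 (by simpa using h0)]
  have e : ∫ s in (0:ℝ)..1, (1 - s) * s ^ 2 = 1 / 12 := by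
    have : ∀ s : ℝ, (1 - s) * s ^ 2 = s ^ 2 - s ^ 3 := fun s => by ring
    simp only [this]
    rw [intervalIntegral.integral_sub (by simp) (by simp)]
    simp; norm_num
  have e' : ∀ x : ℝ, (x : ℂ) ^ 2 * ∫ s in (0:ℝ)..1, (1 - (s:ℂ)) *
      (((s:ℂ) * x) ^ 2 * Complex.exp (0 * ((s:ℂ) * x))) = ((x ^ 4 : ℝ) : ℂ) * (1 / 12) := by
    intro x
    have : ∀ s : ℝ, (1 - (s:ℂ)) * (((s:ℂ) * x) ^ 2 * Complex.exp (0 * ((s:ℂ) * x))) =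
      (((1 - s) * s ^ 2 : ℝ) : ℂ) * x ^ 2 := fun s => by simp; ring
    simp only [this]
    rw [intervalIntegral.integral_mul_const, intervalIntegral.integral_ofReal, e]
    push_cast; ring
  simp only [e']
  rw [integral_mul_const, integral_complex_ofReal]; simp; ring

end

end

section

open scoped FourierTransform in
theorem pCoef_decay (R : ℝ) (f : ℝ → ℝ) (hf : ContDiffOn ℝ (⊤ : ℕ∞) f (Set.Ioi 0))
    (l : ℝ → ℝ) (hl : l = fun x => f (Real.exp x) * Real.exp (-R * x))
    (hlint : ∀ n : ℕ, Integrable (iteratedDeriv n l)) :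
    Measurable (pCoef l) ∧ ∀ N : ℕ, Integrable (fun y : ℝ => (1 + |y|) ^ N * ‖pCoef l y‖) := by
  have hls : ContDiff ℝ (⊤ : ℕ∞) l := by
    rw [hl]
    refine ContDiff.mul ?_ (by fun_prop)
    rw [← contDiffOn_univ]
    exact hf.comp (Real.contDiff_exp.contDiffOn) (fun x _ => Real.exp_pos x)
  set lC : ℝ → ℂ := fun x => (l x : ℂ) with hlC
  have hlCs : ContDiff ℝ (⊤ : ℕ∞) lC := Complex.ofRealCLM.contDiff.comp hls
  have hit : ∀ n : ℕ, iteratedDeriv n lC = fun x => ((iteratedDeriv n l x : ℝ) : ℂ) := by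
    intro n
    induction n with
    | zero => simp [hlC]
    | succ k ih =>
      rw [iteratedDeriv_succ, ih]
      ext x
      have hd : DifferentiableAt ℝ (iteratedDeriv k l) x :=
        (hls.differentiable_iteratedDeriv k (by exact_mod_cast ENat.natCast_lt_top k)) x
      rw [iteratedDeriv_succ]
      exact hd.hasDerivAt.ofReal_comp.deriv
  have hintg : ∀ n : ℕ, Integrable (iteratedDeriv n lC) := fun n => by
    rw [hit]; exact (hlint n).ofReal
  have hfou : ∀ y : ℝ, lhat l y = 𝓕 lC (y / (2 * Real.pi)) := by
    intro y
    rw [Real.fourier_real_eq_integral_exp_smul, lhat]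
    congr 1; ext x
    rw [smul_eq_mul, mul_comm]
    congr 2
    have := Real.pi_ne_zero
    push_cast
    have hpi : (Real.pi : ℂ) ≠ 0 := by exact_mod_cast this
    field_simp
  have hmeas : Measurable (lhat l) := by
    have hc : Continuous l := hls.continuous
    have : StronglyMeasurable (fun z : ℝ × ℝ => (l z.2 : ℂ) * Complex.exp (-(Complex.I * (z.2 : ℂ) * (z.1 : ℂ)))) := by
      apply Continuous.stronglyMeasurable
      fun_prop
    exact this.integral_prod_right'.measurable
  have hdec : ∀ n : ℕ, ∃ C : ℝ, ∀ y : ℝ, |y| ^ n * ‖lhat l y‖ ≤ C := by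
    intro n
    refine ⟨∫ x, ‖iteratedDeriv n lC x‖, fun y => ?_⟩
    have h1 := Real.fourier_iteratedDeriv (n := n) hlCs (fun m _ => hintg m) (by simp)
    have h2 := congrFun h1 (y / (2 * Real.pi))
    have h3 : |y| ^ n * ‖lhat l y‖ = ‖𝓕 (iteratedDeriv n lC) (y / (2 * Real.pi))‖ := by
      rw [h2, hfou, norm_smul, norm_pow]
      congr 2
      have hpi : (Real.pi : ℂ) ≠ 0 := by exact_mod_cast Real.pi_ne_zero
      have : (2 * Real.pi * I * ((y / (2 * Real.pi) : ℝ) : ℂ) : ℂ) = I * y := by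
        push_cast; field_simp
      rw [this]; simp
    rw [h3, Real.fourier_real_eq_integral_exp_smul]
    refine (norm_integral_le_integral_norm _).trans (le_of_eq ?_)
    congr 1; ext x
    rw [norm_smul, Complex.norm_exp_ofReal_mul_I, one_mul]
  refine ⟨hmeas.div_const _, fun N => ?_⟩
  obtain ⟨C0, h0⟩ := hdec 0
  obtain ⟨C1, h1⟩ := hdec (N + 2)
  have hb : ∀ y : ℝ, (1 + |y|) ^ (N + 2) * ‖lhat l y‖ ≤ 2 ^ (N + 1) * (C0 + C1) := by
    intro y
    have k := add_pow_le (zero_le_one) (abs_nonneg y) (N + 2)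
    rw [one_pow] at k
    have k0 := h0 y
    have k1 := h1 y
    rw [pow_zero, one_mul] at k0
    calc _ ≤ (2 ^ (N + 2 - 1) * (1 + |y| ^ (N + 2))) * ‖lhat l y‖ := by gcongr
      _ = 2 ^ (N + 1) * (‖lhat l y‖ + |y| ^ (N + 2) * ‖lhat l y‖) := by
        rw [show N + 2 - 1 = N + 1 by omega]; ring
      _ ≤ _ := by gcongr
  have hi : Integrable (fun y : ℝ => 2 ^ (N + 1) * (C0 + C1) * (1 + y ^ 2)⁻¹) :=
    integrable_inv_one_add_sq.const_mul _
  have hi2 : Integrable (fun y : ℝ => (1 + |y|) ^ N * ‖lhat l y‖) := by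
    refine hi.mono' ?_ (Filter.Eventually.of_forall fun y => ?_)
    · exact (Continuous.aestronglyMeasurable (by fun_prop)).mul hmeas.norm.aestronglyMeasurable
    · rw [Real.norm_of_nonneg (by positivity), ← div_eq_mul_inv, le_div_iff₀ (by positivity)]
      refine le_trans ?_ (hb y)
      rw [pow_add]
      have : 1 + y ^ 2 ≤ (1 + |y|) ^ 2 := by
        rw [← sq_abs y]; nlinarith [abs_nonneg y]
      calc _ ≤ (1 + |y|) ^ N * ‖lhat l y‖ * (1 + |y|) ^ 2 := by gcongr
        _ = _ := by ring
  refine (hi2.div_const ‖(2 * (Real.pi : ℂ))‖).congr (Filter.Eventually.of_forall fun y => ?_)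
  simp only [pCoef, norm_div]; ring

end

section

/-- Derivatives of the complex moment generating function. -/
noncomputable def Phi (ν : Measure ℝ) (n : ℕ) (w : ℂ) : ℂ :=
  ∫ x : ℝ, (x : ℂ) ^ n * Complex.exp (w * x) ∂ν

theorem Phi_measurable (ν : Measure ℝ) [SFinite ν] (n : ℕ) : Measurable (Phi ν n) := by
  have : StronglyMeasurable (fun z : ℂ × ℝ => (z.2 : ℂ) ^ n * Complex.exp (z.1 * z.2)) := by
    apply Continuous.stronglyMeasurable
    fun_prop
  exact this.integral_prod_right'.measurable

/-- Analytic input on the cumulant function. -/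
structure KSetup (μ : ℝ) (ν : Measure ℝ) (U : Set ℝ) (m0 M0 : ℝ) : Prop where
  one_mem : (1:ℝ) ∈ Icc m0 M0
  der : ∀ n : ℕ, ∀ l ∈ U, ∀ z : ℂ, z.re ∈ Icc m0 M0 →
    HasDerivAt (Phi ν n) (Phi ν (n + 1) (l * z)) (l * z)
  bd : ∀ n : ℕ, ∃ C : ℝ, 0 ≤ C ∧ ∀ l ∈ U, ∀ z : ℂ, z.re ∈ Icc m0 M0 → ‖Phi ν n (l * z)‖ ≤ C
  reb : ∃ B : ℝ, 0 ≤ B ∧ ∀ l ∈ U, ∀ z : ℂ, z.re ∈ Icc m0 M0 →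
    ((μ : ℂ) * z + z ^ 2 * Phi ν 0 (l * z)).re ≤ B

/-- Jet of `κ(λ, Z)`. -/
noncomputable def kapJ {Ω : Type} (μ : ℝ) (ν : Measure ℝ) (Z : Ω → ℂ) : HJet Ω :=
  ⟨fun l w => μ * Z w + Z w ^ 2 * Phi ν 0 (l * Z w), fun l w => Z w ^ 2 * (Phi ν 1 (l * Z w) * Z w),
   fun l w => Z w ^ 2 * ((Phi ν 2 (l * Z w) * Z w) * Z w)⟩

section
variable {Ω : Type} [MeasurableSpace Ω] {μ : ℝ} {ν : Measure ℝ} [SFinite ν] {U : Set ℝ} {m0 M0 : ℝ}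
  {A : Set Ω} {ρ : Ω → ℝ} {Z : Ω → ℂ}

theorem kapJ_good (hs : KSetup μ ν U m0 M0) (hρ : ∀ w ∈ A, 1 ≤ ρ w) (hZ : Measurable Z)
    (hre : ∀ w ∈ A, (Z w).re ∈ Icc m0 M0)
    (hb : ∃ (C : ℝ) (N : ℕ), 0 ≤ C ∧ ∀ w ∈ A, ‖Z w‖ ≤ C * ρ w ^ N) :
    (kapJ μ ν Z).Good U A ρ := by
  have mP : ∀ n : ℕ, ∀ l : ℝ, Measurable (fun w => Phi ν n (l * Z w)) := fun n l =>
    (Phi_measurable ν n).comp (hZ.const_mul _)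
  have dP : ∀ n : ℕ, ∀ w ∈ A, ∀ l ∈ U,
      HasDerivAt (fun k : ℝ => Phi ν n (k * Z w)) (Phi ν (n + 1) (l * Z w) * Z w) l := by
    intro n w hw l hl
    have h1 : HasDerivAt (fun s : ℝ => (s : ℂ)) 1 l := Complex.ofRealCLM.hasDerivAt
    have h2 := (hs.der n l hl (Z w) (hre w hw)).comp l (h1.mul_const (Z w))
    rw [one_mul] at h2
    exact h2
  have d1 : ∀ w ∈ A, ∀ l ∈ U, HasDerivAt (fun k => (kapJ μ ν Z).a k w) ((kapJ μ ν Z).b l w) l :=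
    fun w hw l hl => ((dP 0 w hw l hl).const_mul (Z w ^ 2)).const_add _
  have d2 : ∀ w ∈ A, ∀ l ∈ U, HasDerivAt (fun k => (kapJ μ ν Z).b k w) ((kapJ μ ν Z).c l w) l :=
    fun w hw l hl => ((dP 1 w hw l hl).mul_const (Z w)).const_mul (Z w ^ 2)
  have d3 : ∀ w ∈ A, ∀ l ∈ U, DifferentiableAt ℝ (fun k => (kapJ μ ν Z).c k w) l :=
    fun w hw l hl => ((((dP 2 w hw l hl).mul_const (Z w)).mul_const (Z w)).const_mul
      (Z w ^ 2)).differentiableAt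
  obtain ⟨C, N, hC, hb⟩ := hb
  obtain ⟨C0, hC0, b0⟩ := hs.bd 0
  obtain ⟨C1, hC1, b1⟩ := hs.bd 1
  obtain ⟨C2, hC2, b2⟩ := hs.bd 2
  refine ⟨fun l hl => ?_, fun l hl => ?_, fun l hl => ?_, d1, d2,
    fun w hw l hl => (d3 w hw l hl).continuousAt.continuousWithinAt,
    |μ| * C + C ^ 2 * C0 + C ^ 3 * C1 + C ^ 4 * C2, 4 * N, by positivity, fun w hw l hl => ?_⟩
  · exact (hZ.const_mul _).add ((hZ.pow_const 2).mul (mP 0 l))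
  · exact (hZ.pow_const 2).mul ((mP 1 l).mul hZ)
  · exact (hZ.pow_const 2).mul (((mP 2 l).mul hZ).mul hZ)
  · have hρ1 := hρ w hw
    have z1 := hb w hw
    have p0 := b0 l hl _ (hre w hw)
    have p1 := b1 l hl _ (hre w hw)
    have p2 := b2 l hl _ (hre w hw)
    set X := ρ w ^ N with hX
    have hX1 : 1 ≤ X := one_le_pow₀ hρ1
    have hX4 : ρ w ^ (4 * N) = X ^ 4 := by rw [hX, ← pow_mul]; ring_nf
    have x1 : X ≤ X ^ 4 := le_self_pow₀ hX1 (by norm_num)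
    have x2 : X ^ 2 ≤ X ^ 4 := pow_le_pow_right₀ hX1 (by norm_num)
    have x3 : X ^ 3 ≤ X ^ 4 := pow_le_pow_right₀ hX1 (by norm_num)
    have t1 : |μ| * (C * X) ≤ |μ| * C * X ^ 4 := by
      rw [← mul_assoc]; gcongr
    have t2 : (C * X) ^ 2 * C0 ≤ C ^ 2 * C0 * X ^ 4 := by
      calc _ = C ^ 2 * C0 * X ^ 2 := by ring
        _ ≤ _ := by gcongr
    have t3 : (C * X) ^ 2 * (C1 * (C * X)) ≤ C ^ 3 * C1 * X ^ 4 := by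
      calc _ = C ^ 3 * C1 * X ^ 3 := by ring
        _ ≤ _ := by gcongr
    have t4 : (C * X) ^ 2 * ((C2 * (C * X)) * (C * X)) = C ^ 4 * C2 * X ^ 4 := by ring
    have n1 : 0 ≤ |μ| * C * X ^ 4 := by positivity
    have n2 : 0 ≤ C ^ 2 * C0 * X ^ 4 := by positivity
    have n3 : 0 ≤ C ^ 3 * C1 * X ^ 4 := by positivity
    have n4 : 0 ≤ C ^ 4 * C2 * X ^ 4 := by positivity
    have zz : ‖Z w ^ 2‖ ≤ (C * X) ^ 2 := by rw [norm_pow]; gcongr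
    have e : (|μ| * C + C ^ 2 * C0 + C ^ 3 * C1 + C ^ 4 * C2) * ρ w ^ (4 * N) =
      |μ| * C * X ^ 4 + C ^ 2 * C0 * X ^ 4 + C ^ 3 * C1 * X ^ 4 + C ^ 4 * C2 * X ^ 4 := by
      rw [hX4]; ring
    rw [e]
    refine ⟨?_, ?_, ?_⟩
    · refine (norm_add_le _ _).trans ?_
      have q1 : ‖(μ : ℂ) * Z w‖ ≤ |μ| * (C * X) :=
        HJet.norm_mul_le_aux (by simp) z1
      have q2 := HJet.norm_mul_le_aux zz p0
      linarith
    · refine (HJet.norm_mul_le_aux zz (HJet.norm_mul_le_aux p1 z1)).trans ?_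
      linarith
    · refine (HJet.norm_mul_le_aux zz (HJet.norm_mul_le_aux (HJet.norm_mul_le_aux p2 z1) z1)).trans ?_
      linarith

/-- `½σ² z (z-1)`. -/
noncomputable def qBS (σ2 : ℝ) (z : ℂ) : ℂ := (σ2 : ℂ) / 2 * z * (z - 1)

/-- Integrand jet in `α`. -/
noncomputable def innerJ (μ : ℝ) (ν : Measure ℝ) (σ2 : ℝ) (Z : Ω → ℂ) (τ : Ω → ℝ) : HJet (Ω × ℝ) :=
  (((kapJ μ ν (fun p : Ω × ℝ => Z p.1)).mul
    (HJet.const (fun p : Ω × ℝ => ((τ p.1 * p.2 : ℝ) : ℂ)))).exp).mul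
    (HJet.const (fun p : Ω × ℝ => Complex.exp (qBS σ2 (Z p.1) * ((τ p.1 * (1 - p.2) : ℝ) : ℂ))))

/-- Jet of `α(λ; Z, T-τ)`. -/
noncomputable def alphaJ (μ : ℝ) (ν : Measure ℝ) (σ2 : ℝ) (Z : Ω → ℂ) (τ : Ω → ℝ) : HJet Ω :=
  (((kapJ μ ν Z).mul (HJet.const (fun w => (τ w : ℂ)))).exp).sub
    ((kapJ μ ν (fun _ => 1)).mul ((HJet.const (fun w => Z w * τ w)).mul
      (HJet.integ (volume.restrict (Ioc (0:ℝ) 1)) (fun _ => 1) (innerJ μ ν σ2 Z τ))))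

theorem re_mul_le_aux {x : ℂ} {B s T : ℝ} (hx : x.re ≤ B) (hB : 0 ≤ B) (hs : s ∈ Icc 0 T) :
    (x * (s : ℂ)).re ≤ B * T := by
  rw [mul_comm, re_ofReal_mul, mul_comm]
  calc x.re * s ≤ B * s := mul_le_mul_of_nonneg_right hx hs.1
    _ ≤ B * T := mul_le_mul_of_nonneg_left hs.2 hB

theorem alphaJ_good (hs : KSetup μ ν U m0 M0) (hU : IsOpen U) (hρ : ∀ w ∈ A, 1 ≤ ρ w)
    (hZ : Measurable Z)
    (hre : ∀ w ∈ A, (Z w).re ∈ Icc m0 M0)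
    (hb : ∃ (C : ℝ) (N : ℕ), 0 ≤ C ∧ ∀ w ∈ A, ‖Z w‖ ≤ C * ρ w ^ N)
    {σ2 T : ℝ} {τ : Ω → ℝ} (hτ : Measurable τ) (hT : ∀ w ∈ A, τ w ∈ Icc 0 T)
    (hq : ∃ B : ℝ, 0 ≤ B ∧ ∀ w ∈ A, (qBS σ2 (Z w)).re ≤ B) :
    (alphaJ μ ν σ2 Z τ).Good U A ρ := by
  obtain ⟨Bk, hBk, hBk'⟩ := hs.reb
  obtain ⟨Bq, hBq, hBq'⟩ := hq
  have gk := kapJ_good hs hρ hZ hre hb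
  have g1 : (kapJ μ ν (fun _ : Ω => (1:ℂ))).Good U A ρ :=
    kapJ_good hs hρ measurable_const (fun w _ => by simpa using hs.one_mem)
      ⟨1, 0, zero_le_one, fun w _ => by simp⟩
  have bτ : ∀ w ∈ A, ‖(τ w : ℂ)‖ ≤ T := fun w hw => by
    rw [norm_real, Real.norm_of_nonneg (hT w hw).1]; exact (hT w hw).2
  have hT0 : ∀ w ∈ A, 0 ≤ T := fun w hw => (hT w hw).1.trans (hT w hw).2
  have gτ : (HJet.const (fun w => (τ w : ℂ))).Good U A ρ := by
    refine HJet.good_const (by fun_prop) ⟨|T|, 0, abs_nonneg _, fun w hw => ?_⟩ hρ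
    simpa using (bτ w hw).trans (le_abs_self T)
  have gZτ : (HJet.const (fun w => Z w * τ w)).Good U A ρ := by
    obtain ⟨C, N, hC, hb⟩ := hb
    refine HJet.good_const (by fun_prop) ⟨C * |T|, N, by positivity, fun w hw => ?_⟩ hρ
    refine (HJet.norm_mul_le_aux (hb w hw) ((bτ w hw).trans (le_abs_self T))).trans (le_of_eq ?_)
    ring
  refine (((gk.mul gτ hρ).exp hρ ⟨Bk * T, fun w hw l hl => ?_⟩)).sub
    (g1.mul (gZτ.mul ?_ hρ) hρ) hρ
  · exact re_mul_le_aux (hBk' l hl _ (hre w hw)) hBk (hT w hw)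
  set A₂ : Set (Ω × ℝ) := {p | p.1 ∈ A ∧ p.2 ∈ Icc (0:ℝ) 1} with hA₂
  have hρ₂ : ∀ p ∈ A₂, 1 ≤ (fun p : Ω × ℝ => ρ p.1) p := fun p hp => hρ _ hp.1
  have hmem : ∀ p ∈ A₂, τ p.1 * p.2 ∈ Icc 0 T ∧ τ p.1 * (1 - p.2) ∈ Icc 0 T := by
    intro p hp
    obtain ⟨h1, h2⟩ := hT _ hp.1
    obtain ⟨h3, h4⟩ := hp.2
    refine ⟨⟨by positivity, by nlinarith⟩, ⟨mul_nonneg h1 (by linarith), by nlinarith⟩⟩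
  refine HJet.Good.integ (A₂ := A₂) (ρ₂ := fun p => ρ p.1) (r := fun _ => 1) hU ?_
    measurable_const hρ (fun w hw => ?_) (fun N => by simp)
  swap
  · filter_upwards [ae_restrict_mem measurableSet_Ioc] with x hx
    exact ⟨⟨hw, Ioc_subset_Icc_self hx⟩, by simp⟩
  have gk2 : (kapJ μ ν (fun p : Ω × ℝ => Z p.1)).Good U A₂ (fun p => ρ p.1) := by
    refine kapJ_good hs hρ₂ (by fun_prop) (fun p hp => hre _ hp.1) ?_
    obtain ⟨C, N, hC, hb⟩ := hb
    exact ⟨C, N, hC, fun p hp => hb _ hp.1⟩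
  refine HJet.Good.mul (HJet.Good.exp (gk2.mul (HJet.good_const (by fun_prop)
    ⟨|T|, 0, abs_nonneg _, fun p hp => ?_⟩ hρ₂) hρ₂) hρ₂ ⟨Bk * T, fun p hp l hl => ?_⟩)
    (HJet.good_const ?_ ⟨Real.exp (Bq * T), 0, (Real.exp_pos _).le, fun p hp => ?_⟩ hρ₂) hρ₂
  · rw [norm_real, Real.norm_of_nonneg (hmem p hp).1.1]
    simpa using (hmem p hp).1.2.trans (le_abs_self T)
  · exact re_mul_le_aux (hBk' l hl _ (hre _ hp.1)) hBk (hmem p hp).1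
  · unfold qBS; fun_prop
  · rw [Complex.norm_exp, pow_zero, mul_one]
    exact Real.exp_le_exp.2 (re_mul_le_aux (hBq' _ hp.1) hBq (hmem p hp).2)

omit [MeasurableSpace Ω] [SFinite ν] in
theorem alphaJ_a_eq {σ2 T t l : ℝ} {τ : Ω → ℝ} {w : Ω} (hτ : τ w = T - t) :
    (alphaJ μ ν σ2 Z τ).a l w =
      (1 - (kapJ μ ν (fun _ => 1)).a l w *
          ∫ u in t..T, Z w * Complex.exp ((kapJ μ ν Z).a l w * ((u : ℂ) - (T : ℂ))) *
            Complex.exp (((σ2 : ℝ) : ℂ) / 2 * Z w * (Z w - 1) * ((T : ℂ) - (u : ℂ)))) *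
        Complex.exp ((kapJ μ ν Z).a l w * ((T : ℂ) - (t : ℂ))) := by
  set k := (kapJ μ ν Z).a l w with hk
  have hsub := intervalIntegral.smul_integral_comp_mul_add (a := 0) (b := 1)
    (fun u : ℝ => Z w * Complex.exp (k * ((u : ℂ) - (T : ℂ))) *
            Complex.exp (((σ2 : ℝ) : ℂ) / 2 * Z w * (Z w - 1) * ((T : ℂ) - (u : ℂ)))) (T - t) t
  rw [mul_zero, zero_add, mul_one, sub_add_cancel] at hsub
  rw [← hsub]
  simp only [alphaJ, HJet.sub, HJet.mul, HJet.exp, HJet.const, HJet.integ, innerJ]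
  rw [← hk, hτ]
  simp only [mul_one]
  have e2 : ∀ x : ℝ, (kapJ μ ν (fun p : Ω × ℝ => Z p.1)).a l (w, x) = k := fun x => rfl
  simp only [e2, hτ]
  rw [← intervalIntegral.integral_of_le zero_le_one]
  have hI : Z w * (∫ s in (0:ℝ)..1, Complex.exp (k * (((T - t) * s : ℝ) : ℂ)) *
        Complex.exp (qBS σ2 (Z w) * (((T - t) * (1 - s) : ℝ) : ℂ))) =
      (∫ s in (0:ℝ)..1, Z w * Complex.exp (k * ((((T - t) * s + t : ℝ) : ℂ) - (T : ℂ))) *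
            Complex.exp (((σ2 : ℝ) : ℂ) / 2 * Z w * (Z w - 1) *
              ((T : ℂ) - (((T - t) * s + t : ℝ) : ℂ)))) * Complex.exp (k * ((T:ℂ) - t)) := by
    rw [← intervalIntegral.integral_mul_const, ← intervalIntegral.integral_const_mul]
    refine intervalIntegral.integral_congr fun s _ => ?_
    simp only [qBS]
    push_cast
    have e3 : Complex.exp (k * (((T:ℂ) - t) * s)) = Complex.exp (k * (((T:ℂ) - t) * s + t - T)) *
        Complex.exp (k * (T - t)) := by
      rw [← Complex.exp_add]; congr 1; ring
    rw [e3]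
    have e4 : ((T:ℂ) - (((T:ℂ) - t) * s + t)) = ((T:ℂ) - t) * (1 - s) := by ring
    rw [e4]; ring
  rw [Complex.real_smul, ofReal_sub]
  linear_combination (-(kapJ μ ν fun _ => 1).a l w * ((T:ℂ) - t)) * hI

/-- `∫₀¹ e^{θ s} ds`. -/
noncomputable def PP (θ : ℂ) : ℂ := ∫ s in (0:ℝ)..1, Complex.exp (θ * s)

theorem PP_eq (θ : ℂ) : θ * PP θ = Complex.exp θ - 1 := by
  rw [PP, ← intervalIntegral.integral_const_mul]
  have hd : ∀ s ∈ uIcc (0:ℝ) 1, HasDerivAt (fun s : ℝ => Complex.exp (θ * s))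
      (θ * Complex.exp (θ * s)) s := by
    intro s _
    have h1 : HasDerivAt (fun s : ℝ => (s : ℂ)) 1 s := Complex.ofRealCLM.hasDerivAt
    refine ((h1.const_mul θ).cexp).congr_deriv ?_
    ring
  rw [intervalIntegral.integral_eq_sub_of_hasDerivAt hd]
  · simp
  · apply Continuous.intervalIntegrable; fun_prop

theorem QQ_eq (θ : ℂ) : θ * (∫ s in (0:ℝ)..1, (s:ℂ) * Complex.exp (θ * s)) =
    Complex.exp θ - PP θ := by
  rw [PP, ← intervalIntegral.integral_const_mul]
  have hd : ∀ s ∈ uIcc (0:ℝ) 1, HasDerivAt (fun s : ℝ => (s:ℂ) * Complex.exp (θ * s))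
      (Complex.exp (θ * s) + θ * ((s:ℂ) * Complex.exp (θ * s))) s := by
    intro s _
    have h1 : HasDerivAt (fun s : ℝ => (s : ℂ)) 1 s := Complex.ofRealCLM.hasDerivAt
    refine (h1.mul ((h1.const_mul θ).cexp)).congr_deriv ?_
    ring
  have h := intervalIntegral.integral_eq_sub_of_hasDerivAt hd
    (Continuous.intervalIntegrable (by fun_prop) _ _)
  rw [intervalIntegral.integral_add (Continuous.intervalIntegrable (by fun_prop) _ _)
    (Continuous.intervalIntegrable (by fun_prop) _ _)] at h
  simp only [ofReal_one, mul_one, one_mul, ofReal_zero, mul_zero, Complex.exp_zero, sub_zero] at h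
  rw [← h]; ring

omit [MeasurableSpace Ω] [SFinite ν] in
theorem alphaJ_zero {σ2 k3 : ℝ} {τ : Ω → ℝ} {w : Ω} (h0 : Phi ν 0 0 = (σ2 : ℂ) / 2)
    (h1 : Phi ν 1 0 = (k3 : ℂ) / 6) :
    (alphaJ μ ν σ2 Z τ).a 0 w = Complex.exp (qBS σ2 (Z w) * τ w) ∧
    (alphaJ μ ν σ2 Z τ).b 0 w = Complex.exp (qBS σ2 (Z w) * τ w) * (τ w * (k3 / 6) *
      (Z w ^ 3 - Z w) * PP ((μ + σ2 / 2 : ℂ) * Z w * τ w)) := by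
  set θ : ℂ := (μ + σ2 / 2 : ℂ) * Z w * τ w with hθ
  have ka : ∀ z : ℂ, (μ:ℂ) * z + z ^ 2 * ((σ2 : ℂ) / 2) = qBS σ2 z + (μ + σ2 / 2 : ℂ) * z := by
    intro z; unfold qBS; ring
  have e : ∀ s : ℝ, Complex.exp ((qBS σ2 (Z w) + (μ + σ2 / 2 : ℂ) * Z w) * ((τ w * s : ℝ):ℂ)) *
      Complex.exp (qBS σ2 (Z w) * ((τ w * (1 - s) : ℝ) : ℂ)) =
      Complex.exp (qBS σ2 (Z w) * τ w) * Complex.exp (θ * s) := by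
    intro s
    rw [← Complex.exp_add, ← Complex.exp_add]; congr 1; rw [hθ]; push_cast; ring
  have eI : ∫ s in Ioc (0:ℝ) 1, (innerJ μ ν σ2 Z τ).a 0 (w, s) * 1 =
      Complex.exp (qBS σ2 (Z w) * τ w) * PP θ := by
    simp only [innerJ, HJet.mul, HJet.exp, HJet.const, kapJ, ofReal_zero, zero_mul, h0, ka, mul_one, e]
    rw [integral_const_mul, ← intervalIntegral.integral_of_le zero_le_one, PP]
  have eI1 : ∫ s in Ioc (0:ℝ) 1, (innerJ μ ν σ2 Z τ).b 0 (w, s) * 1 =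
      Complex.exp (qBS σ2 (Z w) * τ w) * (Z w ^ 3 * (k3 / 6) * τ w) *
        (∫ s in (0:ℝ)..1, (s:ℂ) * Complex.exp (θ * s)) := by
    simp only [innerJ, HJet.mul, HJet.exp, HJet.const, kapJ, ofReal_zero, zero_mul, h0, h1, ka, mul_one,
      mul_zero, add_zero]
    rw [← intervalIntegral.integral_of_le zero_le_one, ← intervalIntegral.integral_const_mul]
    refine intervalIntegral.integral_congr fun s _ => ?_
    beta_reduce
    rw [mul_right_comm (Complex.exp _), e]; push_cast; ring
  have eE : Complex.exp ((qBS σ2 (Z w) + (μ + σ2 / 2 : ℂ) * Z w) * τ w) =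
      Complex.exp (qBS σ2 (Z w) * τ w) * Complex.exp θ := by
    rw [← Complex.exp_add]; congr 1; rw [hθ]; ring
  have hP := PP_eq θ
  have hQ := QQ_eq θ
  set Q := ∫ s in (0:ℝ)..1, (s:ℂ) * Complex.exp (θ * s) with hQdef
  have hθP : (μ + σ2 / 2 : ℂ) * Z w * τ w * PP θ = Complex.exp θ - 1 := by rw [← hθ]; exact hP
  have hθQ : (μ + σ2 / 2 : ℂ) * Z w * τ w * Q = Complex.exp θ - PP θ := by rw [← hθ]; exact hQ
  constructor
  · simp only [alphaJ, HJet.sub, HJet.integ, HJet.mul, HJet.exp]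
    simp only [eI]
    simp only [kapJ, HJet.const, ofReal_zero, zero_mul, h0, ka, eE]
    have : qBS σ2 1 = 0 := by simp [qBS]
    rw [this]
    linear_combination -Complex.exp (qBS σ2 (Z w) * τ w) * hθP
  · simp only [alphaJ, HJet.sub, HJet.integ, HJet.mul, HJet.exp]
    simp only [eI, eI1]
    simp only [kapJ, HJet.const, ofReal_zero, zero_mul, h0, h1, ka, eE]
    have : qBS σ2 1 = 0 := by simp [qBS]
    rw [this]
    linear_combination -Complex.exp (qBS σ2 (Z w) * τ w) * (Z w ^ 3 * (k3 / 6) * τ w) * hθQ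

end

end

section

theorem box_aux {m0 M0 a b : ℝ} (hm : m0 ≤ 0) (hM : 2 ≤ M0) (ha : a < m0) (hb : M0 < b) :
    ∃ δ a' b' : ℝ, 0 < δ ∧ a < a' ∧ b' < b ∧ ∀ l ∈ Ioo (-δ) (1 + δ), ∀ r ∈ Icc m0 M0,
      l * r ∈ Icc a' b' := by
  set W := M0 - m0 with hW
  have hWpos : 0 < W := by linarith
  obtain ⟨d, hd, hd1, hd2⟩ : ∃ d : ℝ, 0 < d ∧ d < m0 - a ∧ d < b - M0 := by
    refine ⟨min (m0 - a) (b - M0) / 2, ?_, ?_, ?_⟩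
    · have : 0 < min (m0 - a) (b - M0) := lt_min (by linarith) (by linarith)
      linarith
    · have := min_le_left (m0 - a) (b - M0)
      linarith
    · have := min_le_right (m0 - a) (b - M0)
      linarith
  refine ⟨d / W, m0 - d, M0 + d, div_pos hd hWpos, by linarith, by linarith, ?_⟩
  rintro l ⟨hl1, hl2⟩ r ⟨hr1, hr2⟩
  set δ := d / W with hδ
  have hδW : δ * W = d := by rw [hδ]; field_simp
  have hδ0 : 0 < δ := div_pos hd hWpos
  have hrW : r ≤ W := by linarith
  have hrW' : -W ≤ r := by linarith
  rcases lt_or_ge l 0 with h | h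
  · constructor <;> nlinarith
  rcases le_or_gt l 1 with h' | h'
  · constructor <;> nlinarith
  · constructor <;> nlinarith

theorem kSetup_exists (μ c : ℝ) (K : Measure ℝ)
    (hKmin : ∫⁻ x : ℝ, ENNReal.ofReal (min 1 (x ^ 2)) ∂K ≠ ⊤) (a b : ℝ)
    (h0 : (0 : ℝ) ∈ Set.Ioo a b)
    (hKexp : ∀ s ∈ Set.Ioo a b,
      ∫⁻ x in {x : ℝ | 1 ≤ |x|}, ENNReal.ofReal (Real.exp (s * x)) ∂K ≠ ⊤)
    (hc : 0 ≤ c) {m0 M0 : ℝ} (hm : m0 ≤ 0) (hM : 2 ≤ M0) (ha : a < m0) (hb : M0 < b) :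
    ∃ U : Set ℝ, IsOpen U ∧ Icc 0 1 ⊆ U ∧ KSetup μ (lkNu c K) U m0 M0 ∧
      ∀ l ∈ U, ∀ z : ℂ, z.re ∈ Icc m0 M0 →
        kappa μ c K l z = μ * z + z ^ 2 * Phi (lkNu c K) 0 (l * z) := by
  obtain ⟨δ, a', b', hδ, ha', hb', hbox⟩ := box_aux hm hM ha hb
  have hsub := lkNu_exp c K hKmin a b h0 hKexp
  have hfin := lkNu_finite c K hKmin a b h0 hKexp
  have hintg : ∀ r ∈ Ioo a b, r ∈ interior (integrableExpSet id (lkNu c K)) := fun r hr =>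
    interior_maximal hsub isOpen_Ioo hr
  have hmem : ∀ l ∈ Ioo (-δ) (1 + δ), ∀ r ∈ Icc m0 M0, l * r ∈ Ioo a b := fun l hl r hr =>
    ⟨ha'.trans_le (hbox l hl r hr).1, (hbox l hl r hr).2.trans_lt hb'⟩
  have hne : a' ≤ b' := by
    have := hbox 0 ⟨by linarith, by linarith⟩ 0 ⟨hm, by linarith⟩
    exact this.1.trans this.2
  have hre : ∀ (l : ℝ) (z : ℂ), ((l:ℂ) * z).re = l * z.re := fun l z => by
    rw [re_ofReal_mul]
  have hkap : ∀ l ∈ Ioo (-δ) (1 + δ), ∀ z : ℂ, z.re ∈ Icc m0 M0 →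
        kappa μ c K l z = μ * z + z ^ 2 * Phi (lkNu c K) 0 (l * z) := fun l hl z hz =>
    kappa_eq_nu μ c K hKmin a b h0 hKexp hc l z (hmem l hl _ hz)
  have hbd : ∀ n : ℕ, ∃ C : ℝ, 0 ≤ C ∧ ∀ l ∈ Ioo (-δ) (1 + δ), ∀ z : ℂ, z.re ∈ Icc m0 M0 →
      ‖Phi (lkNu c K) n (l * z)‖ ≤ C := by
    intro n
    have i1 := integrable_pow_abs_mul_exp_of_mem_interior_integrableExpSet (X := id)
      (hintg a' ⟨ha', hne.trans_lt hb'⟩) n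
    have i2 := integrable_pow_abs_mul_exp_of_mem_interior_integrableExpSet (X := id)
      (hintg b' ⟨ha'.trans_le hne, hb'⟩) n
    refine ⟨∫ x : ℝ, (|id x| ^ n * Real.exp (a' * id x) + |id x| ^ n * Real.exp (b' * id x))
      ∂(lkNu c K), integral_nonneg fun x => by positivity, fun l hl z hz => ?_⟩
    refine norm_integral_le_of_norm_le (i1.add i2) (Filter.Eventually.of_forall fun x => ?_)
    rw [norm_mul, norm_pow, norm_real, Complex.norm_exp, mul_comm ((l:ℂ) * z), re_ofReal_mul, hre]
    have hb := hbox l hl _ hz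
    set r := l * z.re
    simp only [Real.norm_eq_abs, id, ← mul_add, Pi.add_apply]
    gcongr
    rcases le_total 0 x with hx | hx
    · have : Real.exp (x * r) ≤ Real.exp (b' * x) := Real.exp_le_exp.2 (by nlinarith [hb.2])
      linarith [Real.exp_pos (a' * x)]
    · have : Real.exp (x * r) ≤ Real.exp (a' * x) := Real.exp_le_exp.2 (by nlinarith [hb.1])
      linarith [Real.exp_pos (b' * x)]
  refine ⟨Ioo (-δ) (1 + δ), isOpen_Ioo, fun x hx => ⟨by linarith [hx.1], by linarith [hx.2]⟩,
    ⟨⟨by linarith, by linarith⟩, fun n l hl z hz => ?_, hbd, ?_⟩, hkap⟩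
  · exact hasDerivAt_integral_pow_mul_exp (X := id)
      (hintg _ (by rw [hre]; exact hmem l hl _ hz)) n
  · obtain ⟨C, hC, hbC⟩ := hbd 0
    refine ⟨|μ| * (|m0| + |M0|) + (|m0| + |M0|) ^ 2 * C, by positivity, fun l hl z hz => ?_⟩
    rw [← hkap l hl z hz]
    refine (kappa_re_le μ c K hKmin a b h0 hKexp hc l z (hmem l hl _ hz)).trans ?_
    have hz' : ((z.re : ℂ)).re ∈ Icc m0 M0 := by simpa using hz
    rw [hkap l hl _ hz']
    refine (re_le_norm _).trans ((norm_add_le _ _).trans ?_)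
    have hzn : ‖(z.re : ℂ)‖ ≤ |m0| + |M0| := by
      rw [norm_real, Real.norm_eq_abs, abs_le]
      constructor
      · linarith [hz.1, neg_abs_le m0, abs_nonneg M0]
      · linarith [hz.2, le_abs_self M0, abs_nonneg m0]
    refine add_le_add (HJet.norm_mul_le_aux (by simp) hzn) (HJet.norm_mul_le_aux ?_ (hbC l hl _ hz'))
    rw [norm_pow]; gcongr

theorem Phi_zero_vals (c : ℝ) (K : Measure ℝ)
    (hKmin : ∫⁻ x : ℝ, ENNReal.ofReal (min 1 (x ^ 2)) ∂K ≠ ⊤) (a b : ℝ)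
    (h0 : (0 : ℝ) ∈ Set.Ioo a b)
    (hKexp : ∀ s ∈ Set.Ioo a b,
      ∫⁻ x in {x : ℝ | 1 ≤ |x|}, ENNReal.ofReal (Real.exp (s * x)) ∂K ≠ ⊤)
    (hc : 0 ≤ c) : Phi (lkNu c K) 0 0 = ((c + ∫ x : ℝ, x ^ 2 ∂K : ℝ) : ℂ) / 2 ∧
      Phi (lkNu c K) 1 0 = ((∫ x : ℝ, x ^ 3 ∂K : ℝ) : ℂ) / 6 ∧
      Phi (lkNu c K) 2 0 = ((∫ x : ℝ, x ^ 4 ∂K : ℝ) : ℂ) / 12 := by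
  refine ⟨?_, lkNu_mom1 c K hKmin a b h0 hKexp hc, lkNu_mom2 c K hKmin a b h0 hKexp hc⟩
  have h := kappa_eq_nu 0 c K hKmin a b h0 hKexp hc 0 1 (by simpa using h0)
  simp only [kappa, if_true, ofReal_zero, zero_mul, zero_add, one_pow, mul_one, one_mul] at h
  rw [Phi, h]; simp

end

section

section
variable {Ω : Type}

/-- Jet of `κ̄`. -/
noncomputable def kbJ (μ : ℝ) (ν : Measure ℝ) (Y Z : Ω → ℂ) : HJet Ω :=
  ((kapJ μ ν (fun w => Y w + Z w)).sub (kapJ μ ν Y)).sub (kapJ μ ν Z)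

/-- Jet of `h`. -/
noncomputable def hJ (μ : ℝ) (ν : Measure ℝ) (σ2 : ℝ) (Y Z : Ω → ℂ) (τ : Ω → ℝ) : HJet Ω :=
  ((((kbJ μ ν Y Z).mul ((alphaJ μ ν σ2 Y τ).mul (alphaJ μ ν σ2 Z τ))).sub
    (((kbJ μ ν Y (fun _ => 1)).mul (alphaJ μ ν σ2 Y τ)).mul
      (HJet.const (fun w => Z w * Complex.exp (qBS σ2 (Z w) * τ w))))).sub
    (((kbJ μ ν Z (fun _ => 1)).mul (alphaJ μ ν σ2 Z τ)).mul
      (HJet.const (fun w => Y w * Complex.exp (qBS σ2 (Y w) * τ w))))).add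
    ((kbJ μ ν (fun _ => 1) (fun _ => 1)).mul
      ((HJet.const (fun w => Y w * Complex.exp (qBS σ2 (Y w) * τ w))).mul
        (HJet.const (fun w => Z w * Complex.exp (qBS σ2 (Z w) * τ w)))))

/-- Jet of `J₂`. -/
noncomputable def j2J (μ : ℝ) (ν : Measure ℝ) (σ2 S₀ : ℝ) (Y Z : Ω → ℂ) (τ t : Ω → ℝ) : HJet Ω :=
  ((HJet.const (fun w => cpowR S₀ (Y w + Z w))).mul
    ((kapJ μ ν (fun w => Y w + Z w)).mul (HJet.const (fun w => (t w : ℂ)))).exp).mul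
    (hJ μ ν σ2 Y Z τ)

variable [MeasurableSpace Ω] {μ : ℝ} {ν : Measure ℝ} {U : Set ℝ} {m0 M0 : ℝ}
  {A : Set Ω} {ρ : Ω → ℝ} {Y Z : Ω → ℂ} {τ t : Ω → ℝ} {σ2 S₀ T R : ℝ}

theorem qBS_re_le (hσ : 0 ≤ σ2) {z : ℂ} (hz : z.re = R) : (qBS σ2 z).re ≤ σ2 / 2 * |R * (R - 1)| := by
  have : qBS σ2 z = ((σ2 / 2 : ℝ) : ℂ) * (z * (z - 1)) := by unfold qBS; push_cast; ring
  rw [this, re_ofReal_mul]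
  refine mul_le_mul_of_nonneg_left ?_ (by positivity)
  simp only [mul_re, sub_re, one_re, sub_im, one_im, sub_zero, hz]
  nlinarith [le_abs_self (R * (R - 1)), mul_self_nonneg z.im]

theorem kbJ_good [SFinite ν] (hs : KSetup μ ν U m0 M0) (hρ : ∀ w ∈ A, 1 ≤ ρ w)
    (hY : Measurable Y) (hZ : Measurable Z)
    (hYre : ∀ w ∈ A, (Y w).re ∈ Icc m0 M0) (hZre : ∀ w ∈ A, (Z w).re ∈ Icc m0 M0)
    (hYZre : ∀ w ∈ A, (Y w).re + (Z w).re ∈ Icc m0 M0)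
    (hYb : ∃ (C : ℝ) (N : ℕ), 0 ≤ C ∧ ∀ w ∈ A, ‖Y w‖ ≤ C * ρ w ^ N)
    (hZb : ∃ (C : ℝ) (N : ℕ), 0 ≤ C ∧ ∀ w ∈ A, ‖Z w‖ ≤ C * ρ w ^ N) :
    (kbJ μ ν Y Z).Good U A ρ := by
  refine (((kapJ_good hs hρ (hY.add hZ) (fun w hw => by simpa using hYZre w hw) ?_)).sub
    (kapJ_good hs hρ hY hYre hYb) hρ).sub (kapJ_good hs hρ hZ hZre hZb) hρ
  have g := ((HJet.good_const (U := univ) hY hYb hρ).add (HJet.good_const hZ hZb hρ) hρ).bd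
  obtain ⟨C, N, hC, hb⟩ := g
  exact ⟨C, N, hC, fun w hw => (hb w hw 0 trivial).1⟩

theorem j2J_good [SFinite ν] (hs : KSetup μ ν U m0 M0) (hU : IsOpen U) (hρ : ∀ w ∈ A, 1 ≤ ρ w)
    (hm : m0 ≤ 0) (hM : 2 ≤ M0) (hm2 : m0 ≤ 2 * R) (hM2 : 2 * R ≤ M0) (hσ : 0 ≤ σ2)
    (hY : Measurable Y) (hZ : Measurable Z)
    (hYre : ∀ w ∈ A, (Y w).re = R) (hZre : ∀ w ∈ A, (Z w).re = R)
    (hYb : ∃ (C : ℝ) (N : ℕ), 0 ≤ C ∧ ∀ w ∈ A, ‖Y w‖ ≤ C * ρ w ^ N)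
    (hZb : ∃ (C : ℝ) (N : ℕ), 0 ≤ C ∧ ∀ w ∈ A, ‖Z w‖ ≤ C * ρ w ^ N)
    (hτ : Measurable τ) (hτT : ∀ w ∈ A, τ w ∈ Icc 0 T)
    (ht : Measurable t) (htT : ∀ w ∈ A, t w ∈ Icc 0 T) :
    (j2J μ ν σ2 S₀ Y Z τ t).Good U A ρ := by
  have rY : ∀ w ∈ A, (Y w).re ∈ Icc m0 M0 := fun w hw => by
    rw [hYre w hw]; constructor <;> linarith
  have rZ : ∀ w ∈ A, (Z w).re ∈ Icc m0 M0 := fun w hw => by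
    rw [hZre w hw]; constructor <;> linarith
  have rYZ : ∀ w ∈ A, (Y w).re + (Z w).re ∈ Icc m0 M0 := fun w hw => by
    rw [hZre w hw, hYre w hw]; constructor <;> linarith
  have rY1 : ∀ w ∈ A, (Y w).re + (1:ℂ).re ∈ Icc m0 M0 := fun w hw => by
    rw [hYre w hw, one_re]; constructor <;> linarith
  have rZ1 : ∀ w ∈ A, (Z w).re + (1:ℂ).re ∈ Icc m0 M0 := fun w hw => by
    rw [hZre w hw, one_re]; constructor <;> linarith
  have r1 : ∀ w ∈ A, (1:ℂ).re ∈ Icc m0 M0 := fun w hw => by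
    rw [one_re]; constructor <;> linarith
  have r2 : ∀ w ∈ A, (1:ℂ).re + (1:ℂ).re ∈ Icc m0 M0 := fun w hw => by
    rw [one_re]; constructor <;> linarith
  have b1 : ∃ (C : ℝ) (N : ℕ), 0 ≤ C ∧ ∀ w ∈ A, ‖(1:ℂ)‖ ≤ C * ρ w ^ N :=
    ⟨1, 0, zero_le_one, fun w _ => by simp⟩
  have hBq : (0:ℝ) ≤ σ2 / 2 * |R * (R - 1)| := by positivity
  have aY := alphaJ_good hs hU hρ hY rY hYb hτ hτT
    ⟨σ2 / 2 * |R * (R - 1)|, hBq, fun w hw => qBS_re_le hσ (hYre w hw)⟩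
  have aZ := alphaJ_good hs hU hρ hZ rZ hZb hτ hτT
    ⟨σ2 / 2 * |R * (R - 1)|, hBq, fun w hw => qBS_re_le hσ (hZre w hw)⟩
  have cE : ∀ X : Ω → ℂ, Measurable X → (∀ w ∈ A, (X w).re = R) →
      (∃ (C : ℝ) (N : ℕ), 0 ≤ C ∧ ∀ w ∈ A, ‖X w‖ ≤ C * ρ w ^ N) →
      (HJet.const (fun w => X w * Complex.exp (qBS σ2 (X w) * τ w))).Good U A ρ := by
    intro X hX hXr hXb
    obtain ⟨C, N, hC, hb⟩ := hXb
    refine HJet.good_const (by unfold qBS; fun_prop)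
      ⟨C * Real.exp (σ2 / 2 * |R * (R - 1)| * T), N, by positivity, fun w hw => ?_⟩ hρ
    have h1 : ‖Complex.exp (qBS σ2 (X w) * τ w)‖ ≤ Real.exp (σ2 / 2 * |R * (R - 1)| * T) := by
      rw [Complex.norm_exp]
      exact Real.exp_le_exp.2 (re_mul_le_aux (qBS_re_le hσ (hXr w hw)) hBq (hτT w hw))
    refine (HJet.norm_mul_le_aux (hb w hw) h1).trans (le_of_eq ?_)
    ring
  have cY := cE Y hY hYre hYb
  have cZ := cE Z hZ hZre hZb
  have kYZ : (kapJ μ ν (fun w => Y w + Z w)).Good U A ρ := by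
    refine kapJ_good hs hρ (hY.add hZ) (fun w hw => by simpa using rYZ w hw) ?_
    have g := ((HJet.good_const (U := univ) hY hYb hρ).add (HJet.good_const hZ hZb hρ) hρ).bd
    obtain ⟨C, N, hC, hb⟩ := g
    exact ⟨C, N, hC, fun w hw => (hb w hw 0 trivial).1⟩
  obtain ⟨Bk, hBk, hBk'⟩ := hs.reb
  refine HJet.Good.mul (HJet.Good.mul (HJet.good_const ?_ ?_ hρ) (HJet.Good.exp (kYZ.mul
    (HJet.good_const (by fun_prop) ⟨|T|, 0, abs_nonneg _, fun w hw => ?_⟩ hρ) hρ) hρ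
    ⟨Bk * T, fun w hw l hl => ?_⟩) hρ) ?_ hρ
  · unfold cpowR; fun_prop
  · refine ⟨Real.exp (2 * R * Real.log S₀), 0, (Real.exp_pos _).le, fun w hw => le_of_eq ?_⟩
    rw [cpowR, Complex.norm_exp, mul_comm, re_ofReal_mul, add_re, hYre w hw, hZre w hw]
    rw [pow_zero, mul_one]; congr 1; ring
  · rw [norm_real, Real.norm_of_nonneg (htT w hw).1]
    simpa using (htT w hw).2.trans (le_abs_self T)
  · exact re_mul_le_aux (hBk' l hl _ (by simpa using rYZ w hw)) hBk (htT w hw)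
  · exact ((((kbJ_good hs hρ hY hZ rY rZ rYZ hYb hZb).mul (aY.mul aZ hρ) hρ).sub
      (((kbJ_good hs hρ hY measurable_const rY r1 rY1 hYb b1).mul aY hρ).mul cZ hρ) hρ).sub
      (((kbJ_good hs hρ hZ measurable_const rZ r1 rZ1 hZb b1).mul aZ hρ).mul cY hρ) hρ).add
      ((kbJ_good hs hρ measurable_const measurable_const r1 r1 r2 b1 b1).mul (cY.mul cZ hρ) hρ) hρ

omit [MeasurableSpace Ω] in
theorem kbJ_zero {k3 k4 : ℝ} {w : Ω} (h0 : Phi ν 0 0 = (σ2 : ℂ) / 2)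
    (h1 : Phi ν 1 0 = (k3 : ℂ) / 6) (h2 : Phi ν 2 0 = (k4 : ℂ) / 12) :
    (kbJ μ ν Y Z).a 0 w = σ2 * Y w * Z w ∧
    (kbJ μ ν Y Z).b 0 w = k3 / 2 * (Y w * Z w * (Y w + Z w)) ∧
    (kbJ μ ν Y Z).c 0 w = k4 / 12 * ((Y w + Z w) ^ 4 - Y w ^ 4 - Z w ^ 4) := by
  simp only [kbJ, HJet.sub, kapJ, ofReal_zero, zero_mul, h0, h1, h2]
  refine ⟨by ring, by ring, by ring⟩

/-- The symbol of the correction in `B`, resp. `A`. -/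
noncomputable def symA (μ σ2 : ℝ) (z : ℂ) (τ : ℝ) : ℂ :=
  Complex.exp (qBS σ2 z * τ) * (τ * (z ^ 3 - z) * PP ((μ + σ2 / 2 : ℂ) * z * τ))

/-- Symbol of `D₂`. -/
noncomputable def symD (σ2 : ℝ) (z : ℂ) (τ : ℝ) : ℂ :=
  Complex.exp (qBS σ2 z * τ) * (z * (z - 1))

omit [MeasurableSpace Ω] in
theorem j2J_zero {k3 k4 : ℝ} {w : Ω} (h0 : Phi ν 0 0 = (σ2 : ℂ) / 2)
    (h1 : Phi ν 1 0 = (k3 : ℂ) / 6) (h2 : Phi ν 2 0 = (k4 : ℂ) / 12) :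
    (j2J μ ν σ2 S₀ Y Z τ t).a 0 w = 0 ∧ (j2J μ ν σ2 S₀ Y Z τ t).b 0 w = 0 ∧
    (j2J μ ν σ2 S₀ Y Z τ t).c 0 w = cpowR S₀ (Y w + Z w) *
      Complex.exp ((μ * (Y w + Z w) + σ2 / 2 * (Y w + Z w) ^ 2) * t w) *
      (2 * (k4 / 4 * symD σ2 (Y w) (τ w) * symD σ2 (Z w) (τ w) +
        σ2 * (Y w * (k3 / 6 * symA μ σ2 (Y w) (τ w))) * (Z w * (k3 / 6 * symA μ σ2 (Z w) (τ w))) +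
        k3 / 2 * (symD σ2 (Y w) (τ w) * (Z w * (k3 / 6 * symA μ σ2 (Z w) (τ w))) +
          symD σ2 (Z w) (τ w) * (Y w * (k3 / 6 * symA μ σ2 (Y w) (τ w)))))) := by
  obtain ⟨aY, bY⟩ := alphaJ_zero (μ := μ) (Z := Y) (τ := τ) (w := w) h0 h1
  obtain ⟨aZ, bZ⟩ := alphaJ_zero (μ := μ) (Z := Z) (τ := τ) (w := w) h0 h1
  have bY' : (alphaJ μ ν σ2 Y τ).b 0 w = k3 / 6 * symA μ σ2 (Y w) (τ w) := by
    rw [bY, symA]; ring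
  have bZ' : (alphaJ μ ν σ2 Z τ).b 0 w = k3 / 6 * symA μ σ2 (Z w) (τ w) := by
    rw [bZ, symA]; ring
  obtain ⟨p1, p2, p3⟩ := kbJ_zero (μ := μ) (Y := Y) (Z := Z) (w := w) h0 h1 h2
  obtain ⟨q1, q2, q3⟩ := kbJ_zero (μ := μ) (Y := Y) (Z := fun _ => 1) (w := w) h0 h1 h2
  obtain ⟨r1, r2, r3⟩ := kbJ_zero (μ := μ) (Y := Z) (Z := fun _ => 1) (w := w) h0 h1 h2
  obtain ⟨s1, s2, s3⟩ := kbJ_zero (μ := μ) (Y := fun _ : Ω => 1) (Z := fun _ => 1) (w := w) h0 h1 h2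
  have ha : (hJ μ ν σ2 Y Z τ).a 0 w = 0 := by
    simp only [hJ, HJet.add, HJet.sub, HJet.mul, HJet.const, p1, q1, r1, s1, aY, aZ]
    ring
  have hb : (hJ μ ν σ2 Y Z τ).b 0 w = 0 := by
    simp only [hJ, HJet.add, HJet.sub, HJet.mul, HJet.const, p1, q1, r1, s1, p2, q2, r2, s2, aY, aZ]
    ring
  have hc : (hJ μ ν σ2 Y Z τ).c 0 w = (2 * (k4 / 4 * symD σ2 (Y w) (τ w) * symD σ2 (Z w) (τ w) +
        σ2 * (Y w * (k3 / 6 * symA μ σ2 (Y w) (τ w))) * (Z w * (k3 / 6 * symA μ σ2 (Z w) (τ w))) +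
        k3 / 2 * (symD σ2 (Y w) (τ w) * (Z w * (k3 / 6 * symA μ σ2 (Z w) (τ w))) +
          symD σ2 (Z w) (τ w) * (Y w * (k3 / 6 * symA μ σ2 (Y w) (τ w)))))) := by
    simp only [hJ, HJet.add, HJet.sub, HJet.mul, HJet.const, p1, q1, r1, s1, p2, q2, r2, s2,
      p3, q3, r3, s3, aY, aZ, bY', bZ', symD]
    ring
  refine ⟨?_, ?_, ?_⟩
  · simp only [j2J, HJet.mul, ha, mul_zero]
  · simp only [j2J, HJet.mul, ha, hb, mul_zero, add_zero]
  · have e : (j2J μ ν σ2 S₀ Y Z τ t).c 0 w = cpowR S₀ (Y w + Z w) *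
      Complex.exp ((μ * (Y w + Z w) + (Y w + Z w) ^ 2 * (σ2 / 2)) * t w) *
        (hJ μ ν σ2 Y Z τ).c 0 w := by
      simp only [j2J]
      rw [HJet.mul]
      simp only [ha, hb, mul_zero, zero_add]
      simp only [HJet.mul, HJet.exp, HJet.const, kapJ, ofReal_zero, zero_mul, h0]
    rw [e, hc, mul_comm ((Y w + Z w) ^ 2)]
end

end

section

theorem zLine_re (R y : ℝ) : (zLine R y).re = R := by simp [zLine]

theorem zLine_norm_le (R y : ℝ) : ‖zLine R y‖ ≤ (1 + |R|) * (1 + |y|) := by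
  refine (norm_add_le _ _).trans ?_
  simp only [norm_mul, norm_real, Complex.norm_I, mul_one, Real.norm_eq_abs]
  nlinarith [abs_nonneg R, abs_nonneg y]

theorem zLine_measurable (R : ℝ) : Measurable (zLine R) := by unfold zLine; fun_prop

/-- Jet of the double Fourier integral. -/
noncomputable def dblJ (μ : ℝ) (ν : Measure ℝ) (σ2 S₀ R T : ℝ) (p : ℝ → ℂ) : HJet Unit :=
  HJet.integ volume p (HJet.integ volume p (HJet.integ (volume.restrict (Ioc 0 T)) (fun _ => 1)
    (j2J μ ν σ2 S₀ (fun w : ((Unit × ℝ) × ℝ) × ℝ => zLine R w.1.1.2) (fun w => zLine R w.1.2)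
      (fun w => T - w.2) (fun w => w.2))))

/-- Jet of `w`. -/
noncomputable def wJ (μ : ℝ) (ν : Measure ℝ) (σ2 S₀ R T : ℝ) (p : ℝ → ℂ) : HJet Unit :=
  HJet.integ volume p ((HJet.const (fun w : Unit × ℝ => cpowR S₀ (zLine R w.2))).mul
    (alphaJ μ ν σ2 (fun w : Unit × ℝ => zLine R w.2) (fun _ => T)))

/-- Jet of `ε²`. -/
noncomputable def epsJ (μ : ℝ) (ν : Measure ℝ) (σ2 S₀ R T : ℝ) (p : ℝ → ℂ) (cBS : ℂ) : HJet Unit :=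
  (((wJ μ ν σ2 S₀ R T p).sub (HJet.const (fun _ => cBS))).mul
    ((wJ μ ν σ2 S₀ R T p).sub (HJet.const (fun _ => cBS)))).add (dblJ μ ν σ2 S₀ R T p)

theorem epsJ_good {μ : ℝ} {ν : Measure ℝ} [SFinite ν] {U : Set ℝ} {m0 M0 : ℝ} {σ2 S₀ R T : ℝ}
    {p : ℝ → ℂ} (cBS : ℂ) (hs : KSetup μ ν U m0 M0) (hU : IsOpen U)
    (hm : m0 ≤ 0) (hM : 2 ≤ M0) (hm2 : m0 ≤ 2 * R) (hM2 : 2 * R ≤ M0) (hσ : 0 ≤ σ2) (hT : 0 ≤ T)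
    (hp : Measurable p) (hpi : ∀ N : ℕ, Integrable (fun y => (1 + |y|) ^ N * ‖p y‖)) :
    (epsJ μ ν σ2 S₀ R T p cBS).Good U univ (fun _ => 1) := by
  have h1 : ∀ w ∈ (univ : Set Unit), (1:ℝ) ≤ (fun _ : Unit => (1:ℝ)) w := fun _ _ => le_rfl
  have hz := zLine_measurable R
  have gw : (wJ μ ν σ2 S₀ R T p).Good U univ (fun _ => 1) := by
    have hρ : ∀ w ∈ (univ : Set (Unit × ℝ)), (1:ℝ) ≤ (fun w : Unit × ℝ => 1 + |w.2|) w :=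
      fun w _ => by simp
    refine HJet.Good.integ (A₂ := univ) (ρ₂ := fun w => 1 + |w.2|) (r := fun x => 1 + |x|) hU ?_ hp h1
      (fun w _ => Filter.Eventually.of_forall fun x => ⟨trivial, by simp⟩) hpi
    refine HJet.Good.mul (HJet.good_const ?_ ?_ hρ) ?_ hρ
    · unfold cpowR; fun_prop
    · refine ⟨Real.exp (R * Real.log S₀), 0, (Real.exp_pos _).le, fun w hw => le_of_eq ?_⟩
      rw [cpowR, Complex.norm_exp, mul_comm, re_ofReal_mul, zLine_re]
      rw [pow_zero, mul_one]; congr 1; ring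
    · refine alphaJ_good hs hU hρ (by fun_prop) (fun w _ => ?_)
        ⟨1 + |R|, 1, by positivity, fun w _ => by simpa using zLine_norm_le R w.2⟩
        (T := T) measurable_const (fun w _ => ⟨hT, le_rfl⟩)
        ⟨σ2 / 2 * |R * (R - 1)|, by positivity, fun w _ => qBS_re_le hσ (zLine_re R w.2)⟩
      rw [zLine_re]; constructor <;> linarith
  have gd : (dblJ μ ν σ2 S₀ R T p).Good U univ (fun _ => 1) := by
    refine HJet.Good.integ (A₂ := univ) (ρ₂ := fun w => 1 + |w.2|) (r := fun x => 1 + |x|) hU ?_ hp h1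
      (fun w _ => Filter.Eventually.of_forall fun x => ⟨trivial, by simp⟩) hpi
    refine HJet.Good.integ (A₂ := univ) (ρ₂ := fun w => (1 + |w.1.2|) * (1 + |w.2|))
      (r := fun x => 1 + |x|) hU ?_ hp (fun w _ => by simp)
      (fun w _ => Filter.Eventually.of_forall fun x => ⟨trivial, by simp⟩) hpi
    refine HJet.Good.integ (A₂ := {w | w.2 ∈ Icc 0 T})
      (ρ₂ := fun w => (1 + |w.1.1.2|) * (1 + |w.1.2|))
      (r := fun x => 1) hU ?_ measurable_const (fun w _ => ?_) (fun w _ => ?_) (fun N => by simp)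
    · refine j2J_good (T := T) (R := R) hs hU (fun w _ => ?_) hm hM hm2 hM2 hσ (by fun_prop) (by fun_prop)
        (fun w _ => zLine_re R _) (fun w _ => zLine_re R _) ⟨1 + |R|, 1, by positivity, fun w _ => ?_⟩
        ⟨1 + |R|, 1, by positivity, fun w _ => ?_⟩ (by fun_prop) (fun w hw => ?_) (by fun_prop)
        (fun w hw => hw)
      · nlinarith [abs_nonneg w.1.1.2, abs_nonneg w.1.2,
          mul_nonneg (abs_nonneg w.1.1.2) (abs_nonneg w.1.2)]
      · refine (zLine_norm_le _ _).trans ?_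
        rw [pow_one]
        gcongr
        nlinarith [abs_nonneg w.1.1.2, abs_nonneg w.1.2]
      · refine (zLine_norm_le _ _).trans ?_
        rw [pow_one]
        gcongr
        nlinarith [abs_nonneg w.1.1.2, abs_nonneg w.1.2]
      · have := hw.1
        have := hw.2
        constructor <;> linarith
    · nlinarith [abs_nonneg w.1.2, abs_nonneg w.2, mul_nonneg (abs_nonneg w.1.2) (abs_nonneg w.2)]
    · filter_upwards [ae_restrict_mem measurableSet_Ioc] with x hx
      exact ⟨Ioc_subset_Icc_self hx, by simp⟩
  have gc : (HJet.const (fun _ : Unit => cBS)).Good U univ (fun _ => 1) :=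
    HJet.good_const measurable_const ⟨‖cBS‖, 0, norm_nonneg _, fun w _ => by simp⟩ h1
  exact (((gw.sub gc h1).mul (gw.sub gc h1) h1)).add gd h1

theorem epsJ_zero {μ : ℝ} {ν : Measure ℝ} {σ2 S₀ R T : ℝ} {p : ℝ → ℂ} (cBS : ℂ) {k3 k4 : ℝ}
    (h0 : Phi ν 0 0 = (σ2 : ℂ) / 2)
    (h1 : Phi ν 1 0 = (k3 : ℂ) / 6) (h2 : Phi ν 2 0 = (k4 : ℂ) / 12)
    (hcBS : cBS = ∫ y : ℝ, cpowR S₀ (zLine R y) *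
      Complex.exp (((σ2 : ℝ) : ℂ) / 2 * zLine R y * (zLine R y - 1) * (T : ℂ)) * p y) :
    (epsJ μ ν σ2 S₀ R T p cBS).a 0 () = 0 ∧ (epsJ μ ν σ2 S₀ R T p cBS).b 0 () = 0 ∧
    (epsJ μ ν σ2 S₀ R T p cBS).c 0 () =
      2 * (k3 / 6 * ∫ y, symA μ σ2 (zLine R y) T * cpowR S₀ (zLine R y) * p y) ^ 2 +
      ∫ u, (∫ v, (∫ t in Ioc 0 T, cpowR S₀ (zLine R u + zLine R v) *
      Complex.exp ((μ * (zLine R u + zLine R v) + σ2 / 2 * (zLine R u + zLine R v) ^ 2) * t) *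
      (2 * (k4 / 4 * symD σ2 (zLine R u) (T - t) * symD σ2 (zLine R v) (T - t) +
        σ2 * (zLine R u * (k3 / 6 * symA μ σ2 (zLine R u) (T - t))) *
          (zLine R v * (k3 / 6 * symA μ σ2 (zLine R v) (T - t))) +
        k3 / 2 * (symD σ2 (zLine R u) (T - t) * (zLine R v * (k3 / 6 * symA μ σ2 (zLine R v) (T - t))) +
          symD σ2 (zLine R v) (T - t) * (zLine R u * (k3 / 6 * symA μ σ2 (zLine R u) (T - t)))))) * 1)
          * p v) * p u := by
  have wa : (wJ μ ν σ2 S₀ R T p).a 0 () = cBS := by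
    rw [hcBS]
    simp only [wJ, HJet.integ, HJet.mul, HJet.const]
    refine integral_congr_ae (Filter.Eventually.of_forall fun y => ?_)
    beta_reduce
    rw [(alphaJ_zero (μ := μ) h0 h1).1, qBS]
  have wb : (wJ μ ν σ2 S₀ R T p).b 0 () =
      k3 / 6 * ∫ y, symA μ σ2 (zLine R y) T * cpowR S₀ (zLine R y) * p y := by
    rw [← integral_const_mul]
    simp only [wJ, HJet.integ, HJet.mul, HJet.const]
    refine integral_congr_ae (Filter.Eventually.of_forall fun y => ?_)
    beta_reduce
    rw [(alphaJ_zero (μ := μ) h0 h1).2, symA]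
    ring
  have da : (dblJ μ ν σ2 S₀ R T p).a 0 () = 0 := by
    simp only [dblJ, HJet.integ, fun w => (j2J_zero (μ := μ) (S₀ := S₀)
      (Y := fun w : ((Unit × ℝ) × ℝ) × ℝ => zLine R w.1.1.2) (Z := fun w => zLine R w.1.2)
      (τ := fun w => T - w.2) (t := fun w => w.2) (w := w) h0 h1 h2).1]
    simp
  have db : (dblJ μ ν σ2 S₀ R T p).b 0 () = 0 := by
    simp only [dblJ, HJet.integ, fun w => (j2J_zero (μ := μ) (S₀ := S₀)
      (Y := fun w : ((Unit × ℝ) × ℝ) × ℝ => zLine R w.1.1.2) (Z := fun w => zLine R w.1.2)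
      (τ := fun w => T - w.2) (t := fun w => w.2) (w := w) h0 h1 h2).2.1]
    simp
  refine ⟨?_, ?_, ?_⟩
  · simp only [epsJ, HJet.add, HJet.mul, HJet.sub, HJet.const, wa, da]; ring
  · simp only [epsJ, HJet.add, HJet.mul, HJet.sub, HJet.const, wa, db]; ring
  · simp only [epsJ, HJet.add, HJet.mul, HJet.sub, HJet.const, wa, wb]
    congr 1
    · ring
    · simp only [dblJ, HJet.integ, fun w => (j2J_zero (μ := μ) (S₀ := S₀)
        (Y := fun w : ((Unit × ℝ) × ℝ) × ℝ => zLine R w.1.1.2) (Z := fun w => zLine R w.1.2)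
        (τ := fun w => T - w.2) (t := fun w => w.2) (w := w) h0 h1 h2).2.2]

end

section

/-- Polynomially bounded measurable functions. -/
def PBd {Ω : Type} [MeasurableSpace Ω] (A : Set Ω) (ρ : Ω → ℝ) (f : Ω → ℂ) : Prop :=
  (∀ w ∈ A, 1 ≤ ρ w) ∧ Measurable f ∧ ∃ (C : ℝ) (N : ℕ), 0 ≤ C ∧ ∀ w ∈ A, ‖f w‖ ≤ C * ρ w ^ N

section
variable {Ω : Type} [MeasurableSpace Ω] {A : Set Ω} {ρ : Ω → ℝ} {f g : Ω → ℂ}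

theorem PBd.good (hf : PBd A ρ f) : (HJet.const f).Good univ A ρ :=
  HJet.good_const hf.2.1 hf.2.2 hf.1

theorem PBd.mul (hf : PBd A ρ f) (hg : PBd A ρ g) : PBd A ρ (fun w => f w * g w) := by
  have h := hf.good.mul hg.good hf.1
  obtain ⟨C, N, hC, hb⟩ := h.bd
  exact ⟨hf.1, h.ma 0 trivial, C, N, hC, fun w hw => (hb w hw 0 trivial).1⟩

theorem PBd.add (hf : PBd A ρ f) (hg : PBd A ρ g) : PBd A ρ (fun w => f w + g w) := by
  have h := hf.good.add hg.good hf.1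
  obtain ⟨C, N, hC, hb⟩ := h.bd
  exact ⟨hf.1, h.ma 0 trivial, C, N, hC, fun w hw => (hb w hw 0 trivial).1⟩

theorem PBd.sub (hf : PBd A ρ f) (hg : PBd A ρ g) : PBd A ρ (fun w => f w - g w) := by
  have h := hf.good.sub hg.good hf.1
  obtain ⟨C, N, hC, hb⟩ := h.bd
  exact ⟨hf.1, h.ma 0 trivial, C, N, hC, fun w hw => (hb w hw 0 trivial).1⟩

theorem PBd.of_bound (hρ : ∀ w ∈ A, 1 ≤ ρ w) (hf : Measurable f) (C : ℝ)
    (hb : ∀ w ∈ A, ‖f w‖ ≤ C) : PBd A ρ f :=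
  ⟨hρ, hf, |C|, 0, abs_nonneg _, fun w hw => by simpa using (hb w hw).trans (le_abs_self C)⟩

theorem PBd.const (hρ : ∀ w ∈ A, 1 ≤ ρ w) (x : ℂ) : PBd A ρ (fun _ => x) :=
  PBd.of_bound hρ measurable_const ‖x‖ fun _ _ => le_rfl

theorem PBd.pow (hf : PBd A ρ f) (n : ℕ) : PBd A ρ (fun w => f w ^ n) := by
  induction n with
  | zero => simpa using PBd.const hf.1 1
  | succ n ih => simpa only [pow_succ] using ih.mul hf
end

variable {p : ℝ → ℂ} {T R : ℝ}

theorem PBd.integrable {G : ℝ → ℂ} (hG : PBd univ (fun y => 1 + |y|) G) (hp : Measurable p)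
    (hpi : ∀ N : ℕ, Integrable (fun y => (1 + |y|) ^ N * ‖p y‖)) :
    Integrable (fun y => G y * p y) := by
  obtain ⟨_, hm, C, N, hC, hb⟩ := hG
  refine ((hpi N).const_mul C).mono' (hm.mul hp).aestronglyMeasurable
    (Filter.Eventually.of_forall fun y => ?_)
  rw [norm_mul, ← mul_assoc]
  exact mul_le_mul_of_nonneg_right (hb y trivial) (norm_nonneg _)

/-- weights for the triple integral. -/
def rho3 (w : (ℝ × ℝ) × ℝ) : ℝ := (1 + |w.1.1|) * (1 + |w.1.2|)

theorem one_le_rho3 (w : (ℝ × ℝ) × ℝ) : 1 ≤ rho3 w := by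
  unfold rho3
  nlinarith [abs_nonneg w.1.1, abs_nonneg w.1.2, mul_nonneg (abs_nonneg w.1.1) (abs_nonneg w.1.2)]

/-- domain for the triple integral. -/
def dom3 (T : ℝ) : Set ((ℝ × ℝ) × ℝ) := {w | w.2 ∈ Icc 0 T}

/-- measure for the triple integral. -/
noncomputable def meas3 (T : ℝ) : Measure ((ℝ × ℝ) × ℝ) :=
  ((volume : Measure ℝ).prod (volume : Measure ℝ)).prod (volume.restrict (Ioc 0 T))

theorem trip_integrable {F : (ℝ × ℝ) × ℝ → ℂ} (hF : PBd (dom3 T) rho3 F) (hp : Measurable p)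
    (hpi : ∀ N : ℕ, Integrable (fun y => (1 + |y|) ^ N * ‖p y‖)) :
    Integrable (fun w => F w * (p w.1.1 * p w.1.2)) (meas3 T) := by
  obtain ⟨_, hm, C, N, hC, hb⟩ := hF
  have i1 := ((hpi N).mul_prod (hpi N)).comp_fst (volume.restrict (Ioc 0 T))
  refine (i1.const_mul C).mono' (by fun_prop) ?_
  have h2 : ∀ᵐ w ∂(meas3 T), w.2 ∈ Ioc 0 T :=
    Measure.quasiMeasurePreserving_snd.ae (ae_restrict_mem measurableSet_Ioc)
  filter_upwards [h2] with w hw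
  rw [norm_mul, norm_mul]
  refine (mul_le_mul_of_nonneg_right (hb w (Ioc_subset_Icc_self hw)) (by positivity)).trans
    (le_of_eq ?_)
  rw [rho3, mul_pow]; ring

theorem trip_eq {F : (ℝ × ℝ) × ℝ → ℂ} (hF : PBd (dom3 T) rho3 F) (hp : Measurable p)
    (hpi : ∀ N : ℕ, Integrable (fun y => (1 + |y|) ^ N * ‖p y‖)) :
    ∫ u, (∫ v, (∫ t in Ioc 0 T, F ((u, v), t) * 1) * p v) * p u =
      ∫ w, F w * (p w.1.1 * p w.1.2) ∂(meas3 T) := by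
  have i := trip_integrable hF hp hpi
  rw [meas3, integral_prod _ i, integral_prod _ i.integral_prod_left]
  refine integral_congr_ae (Filter.Eventually.of_forall fun u => ?_)
  beta_reduce
  rw [← integral_mul_const]
  refine integral_congr_ae (Filter.Eventually.of_forall fun v => ?_)
  simp only [mul_one]
  rw [integral_mul_const]
  ring

theorem cpowR_exp {S₀ : ℝ} (hS₀ : 0 < S₀) (x : ℝ) (z : ℂ) :
    cpowR (S₀ * Real.exp x) z = cpowR S₀ z * Complex.exp (z * x) := by
  rw [cpowR, cpowR, Real.log_mul hS₀.ne' (Real.exp_pos _).ne', Real.log_exp, ← Complex.exp_add]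
  congr 1; push_cast; ring

theorem cpowR_norm (S₀ : ℝ) (z : ℂ) : ‖cpowR S₀ z‖ = Real.exp (z.re * Real.log S₀) := by
  rw [cpowR, Complex.norm_exp, mul_comm, re_ofReal_mul, mul_comm]

theorem cpowR_add (S₀ : ℝ) (z w : ℂ) : cpowR S₀ (z + w) = cpowR S₀ z * cpowR S₀ w := by
  rw [cpowR, cpowR, cpowR, ← Complex.exp_add, add_mul]

theorem gauss_sq {S₀ μ σ2 t : ℝ} (hS₀ : 0 < S₀) (hσt : 0 ≤ σ2 * t) {g : ℝ → ℂ} (hg : Integrable g)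
    (hgm : Measurable g) :
    ∫ x : ℝ, (∫ y, g y * cpowR (S₀ * Real.exp (μ * t + x)) (zLine R y)) ^ 2
      ∂(gaussianReal 0 (Real.toNNReal (σ2 * t))) =
    ∫ q : ℝ × ℝ, cpowR S₀ (zLine R q.1 + zLine R q.2) *
      Complex.exp ((μ * (zLine R q.1 + zLine R q.2) + σ2 / 2 * (zLine R q.1 + zLine R q.2) ^ 2) * t) *
      (g q.1 * g q.2) ∂((volume : Measure ℝ).prod (volume : Measure ℝ)) := by
  set γ := gaussianReal 0 (Real.toNNReal (σ2 * t)) with hγ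
  have hz := zLine_measurable R
  have e1 : ∀ x : ℝ, (∫ y, g y * cpowR (S₀ * Real.exp (μ * t + x)) (zLine R y)) ^ 2 =
      ∫ q : ℝ × ℝ, cpowR S₀ (zLine R q.1 + zLine R q.2) *
        Complex.exp (μ * (zLine R q.1 + zLine R q.2) * t) * (g q.1 * g q.2) *
        Complex.exp ((zLine R q.1 + zLine R q.2) * x)
        ∂((volume : Measure ℝ).prod (volume : Measure ℝ)) := by
    intro x
    rw [sq, ← integral_prod_mul]
    refine integral_congr_ae (Filter.Eventually.of_forall fun q => ?_)
    beta_reduce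
    rw [cpowR_exp hS₀, cpowR_exp hS₀, cpowR_add]
    have : Complex.exp (zLine R q.1 * ((μ * t + x : ℝ) : ℂ)) *
        Complex.exp (zLine R q.2 * ((μ * t + x : ℝ) : ℂ)) =
        Complex.exp (μ * (zLine R q.1 + zLine R q.2) * t) *
        Complex.exp ((zLine R q.1 + zLine R q.2) * x) := by
      rw [← Complex.exp_add, ← Complex.exp_add]; congr 1; push_cast; ring
    linear_combination (cpowR S₀ (zLine R q.1) * cpowR S₀ (zLine R q.2) * (g q.1 * g q.2)) * this
  simp only [e1]
  have hintg : Integrable (Function.uncurry fun (x : ℝ) (q : ℝ × ℝ) =>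
      cpowR S₀ (zLine R q.1 + zLine R q.2) *
        Complex.exp (μ * (zLine R q.1 + zLine R q.2) * t) * (g q.1 * g q.2) *
        Complex.exp ((zLine R q.1 + zLine R q.2) * x))
      (γ.prod ((volume : Measure ℝ).prod (volume : Measure ℝ))) := by
    have i1 : Integrable (fun x => Real.exp (2 * R * x)) γ := integrable_exp_mul_gaussianReal _
    have i2 := (hg.norm.mul_prod hg.norm)
    refine ((i1.mul_prod i2).const_mul
      (Real.exp (2 * R * Real.log S₀) * Real.exp (μ * (2 * R) * t))).mono' ?_
      (Filter.Eventually.of_forall fun q => le_of_eq ?_)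
    · unfold cpowR Function.uncurry
      fun_prop
    · simp only [Function.uncurry]
      have r1 : (zLine R q.2.1 + zLine R q.2.2).re = 2 * R := by
        rw [add_re, zLine_re, zLine_re]; ring
      rw [norm_mul, norm_mul, norm_mul, norm_mul, cpowR_norm, r1, Complex.norm_exp, Complex.norm_exp,
        mul_comm _ (q.1 : ℂ), re_ofReal_mul, r1, mul_comm _ (t : ℂ), re_ofReal_mul, re_ofReal_mul, r1,
        mul_comm q.1, mul_comm t]
      ring
  rw [integral_integral_swap hintg]
  refine integral_congr_ae (Filter.Eventually.of_forall fun q => ?_)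
  beta_reduce
  rw [integral_const_mul]
  have h := complexMGF_id_gaussianReal (μ := 0) (v := Real.toNNReal (σ2 * t))
    (zLine R q.1 + zLine R q.2)
  simp only [complexMGF, id] at h
  rw [h]
  have hv : (((Real.toNNReal (σ2 * t) : NNReal) : ℝ) : ℂ) = (σ2 : ℂ) * t := by
    rw [Real.coe_toNNReal _ hσt]; push_cast; rfl
  rw [hv]
  have : Complex.exp ((μ * (zLine R q.1 + zLine R q.2) + σ2 / 2 * (zLine R q.1 + zLine R q.2) ^ 2) * t)
      = Complex.exp (μ * (zLine R q.1 + zLine R q.2) * t) *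
        Complex.exp ((zLine R q.1 + zLine R q.2) * ((0:ℝ):ℂ) +
          (σ2 : ℂ) * t * (zLine R q.1 + zLine R q.2) ^ 2 / 2) := by
    rw [← Complex.exp_add]; congr 1; push_cast; ring
  rw [this]; ring

/-- The Gaussian kernel in the triple integral. -/
noncomputable def ker3 (μ σ2 S₀ R : ℝ) (w : (ℝ × ℝ) × ℝ) : ℂ :=
  cpowR S₀ (zLine R w.1.1 + zLine R w.1.2) *
      Complex.exp ((μ * (zLine R w.1.1 + zLine R w.1.2) +
        σ2 / 2 * (zLine R w.1.1 + zLine R w.1.2) ^ 2) * w.2)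

/-- domain for symbols. -/
def dom2 (T : ℝ) : Set (ℝ × ℝ) := {w | w.1 ∈ Icc 0 T}

/-- weight for symbols. -/
def rho2 (w : ℝ × ℝ) : ℝ := 1 + |w.2|

theorem one_le_rho2 (w : ℝ × ℝ) : 1 ≤ rho2 w := by simp [rho2]

theorem PBd.lift1 {G : ℝ × ℝ → ℂ} (hG : PBd (dom2 T) rho2 G) :
    PBd (dom3 T) rho3 (fun w => G (w.2, w.1.1)) := by
  obtain ⟨_, hm, C, N, hC, hb⟩ := hG
  refine ⟨fun w _ => one_le_rho3 w, by fun_prop, C, N, hC, fun w hw => (hb _ hw).trans ?_⟩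
  have : rho2 (w.2, w.1.1) ≤ rho3 w := by
    simp only [rho2, rho3]; nlinarith [abs_nonneg w.1.1, abs_nonneg w.1.2]
  have := zero_le_one.trans (one_le_rho2 (w.2, w.1.1))
  gcongr

theorem PBd.lift2 {G : ℝ × ℝ → ℂ} (hG : PBd (dom2 T) rho2 G) :
    PBd (dom3 T) rho3 (fun w => G (w.2, w.1.2)) := by
  obtain ⟨_, hm, C, N, hC, hb⟩ := hG
  refine ⟨fun w _ => one_le_rho3 w, by fun_prop, C, N, hC, fun w hw => (hb _ hw).trans ?_⟩
  have : rho2 (w.2, w.1.2) ≤ rho3 w := by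
    simp only [rho2, rho3]; nlinarith [abs_nonneg w.1.1, abs_nonneg w.1.2]
  have := zero_le_one.trans (one_le_rho2 (w.2, w.1.2))
  gcongr

theorem PBd.slice {G : ℝ × ℝ → ℂ} (hG : PBd (dom2 T) rho2 G) {t : ℝ} (ht : t ∈ Icc 0 T) :
    PBd univ (fun y => 1 + |y|) (fun y => G (t, y)) := by
  obtain ⟨_, hm, C, N, hC, hb⟩ := hG
  exact ⟨fun y _ => by simp, by fun_prop, C, N, hC, fun y _ => hb (t, y) ht⟩

theorem ker3_pbd {μ σ2 S₀ : ℝ} (hσ : 0 ≤ σ2) : PBd (dom3 T) rho3 (ker3 μ σ2 S₀ R) := by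
  have hz := zLine_measurable R
  set B : ℝ := |μ| * (2 * |R|) + σ2 / 2 * (2 * R) ^ 2 with hB
  refine PBd.of_bound (fun w _ => one_le_rho3 w) (by unfold ker3 cpowR; fun_prop)
    (Real.exp (2 * R * Real.log S₀) * Real.exp (B * T)) fun w hw => ?_
  have r1 : (zLine R w.1.1 + zLine R w.1.2).re = 2 * R := by
    rw [add_re, zLine_re, zLine_re]; ring
  set z := zLine R w.1.1 + zLine R w.1.2 with hz
  refine HJet.norm_mul_le_aux (by rw [cpowR_norm, r1]) ?_
  rw [Complex.norm_exp]
  refine Real.exp_le_exp.2 (re_mul_le_aux ?_ (by positivity) hw)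
  have e : ((σ2 : ℂ) / 2) = ((σ2 / 2 : ℝ) : ℂ) := by push_cast; rfl
  rw [e, add_re, re_ofReal_mul, re_ofReal_mul, r1]
  have h1 : μ * (2 * R) ≤ |μ| * (2 * |R|) := by
    have := le_abs_self (μ * R)
    rw [abs_mul] at this
    nlinarith
  have h2 : (z ^ 2).re ≤ (2 * R) ^ 2 := by
    rw [sq, mul_re, r1]; nlinarith [mul_self_nonneg z.im]
  have := mul_le_mul_of_nonneg_left h2 (by positivity : 0 ≤ σ2 / 2)
  linarith

theorem quad_eq {μ σ2 S₀ : ℝ} (hS₀ : 0 < S₀) (hσ : 0 ≤ σ2) (hT : 0 ≤ T) {G : ℝ × ℝ → ℂ}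
    (hG : PBd (dom2 T) rho2 G) (hp : Measurable p)
    (hpi : ∀ N : ℕ, Integrable (fun y => (1 + |y|) ^ N * ‖p y‖)) :
    ∫ w, (ker3 μ σ2 S₀ R w * (G (w.2, w.1.1) * G (w.2, w.1.2))) * (p w.1.1 * p w.1.2) ∂(meas3 T) =
    ∫ t in (0:ℝ)..T, ∫ x : ℝ,
      (∫ y, G (t, y) * cpowR (S₀ * Real.exp (μ * t + x)) (zLine R y) * p y) ^ 2
      ∂(gaussianReal 0 (Real.toNNReal (σ2 * t))) := by
  have i := trip_integrable ((ker3_pbd (R := R) (μ := μ) (S₀ := S₀) hσ).mul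
    (hG.lift1.mul hG.lift2)) hp hpi
  rw [meas3, integral_prod_symm _ i, intervalIntegral.integral_of_le hT]
  refine setIntegral_congr_fun measurableSet_Ioc fun t ht => ?_
  beta_reduce
  have hg := hG.slice (Ioc_subset_Icc_self ht)
  have := gauss_sq (R := R) (μ := μ) (σ2 := σ2) (t := t) hS₀ (mul_nonneg hσ ht.1.le)
    (hg.integrable hp hpi) (hg.2.1.mul hp)
  simp only [mul_right_comm _ (cpowR _ _) (p _)]
  rw [this]
  refine integral_congr_ae (Filter.Eventually.of_forall fun q => ?_)
  simp only [ker3]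
  ring

end

section

theorem PP_measurable : Measurable PP := by
  have : StronglyMeasurable (fun z : ℂ × ℝ => Complex.exp (z.1 * z.2)) := by
    apply Continuous.stronglyMeasurable
    fun_prop
  have h := (this.integral_prod_right' (ν := volume.restrict (Ioc (0:ℝ) 1))).measurable
  convert h using 1
  ext θ
  rw [PP, intervalIntegral.integral_of_le zero_le_one]

theorem PP_norm_le (θ : ℂ) : ‖PP θ‖ ≤ Real.exp |θ.re| := by
  have h := intervalIntegral.norm_integral_le_of_norm_le_const (a := 0) (b := 1)
    (f := fun s : ℝ => Complex.exp (θ * s)) (C := Real.exp |θ.re|) (fun s hs => ?_)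
  · simpa [PP] using h
  · rw [uIoc_of_le zero_le_one] at hs
    rw [Complex.norm_exp, mul_comm, re_ofReal_mul]
    refine Real.exp_le_exp.2 ?_
    nlinarith [hs.1, hs.2, le_abs_self θ.re, abs_nonneg θ.re]

theorem PP_zero : PP 0 = 1 := by simp [PP]

section
variable {μ σ2 T R : ℝ}

theorem zLine_pbd : PBd (dom2 T) rho2 (fun w => zLine R w.2) :=
  ⟨fun w _ => one_le_rho2 w, (zLine_measurable R).comp measurable_snd, 1 + |R|, 1, by positivity,
    fun w _ => by simpa [rho2] using zLine_norm_le R w.2⟩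

theorem expq_pbd (hσ : 0 ≤ σ2) :
    PBd (dom2 T) rho2 (fun w => Complex.exp (qBS σ2 (zLine R w.2) * ((T - w.1 : ℝ) : ℂ))) := by
  have hz := zLine_measurable R
  refine PBd.of_bound (fun w _ => one_le_rho2 w) (by unfold qBS; fun_prop)
    (Real.exp (σ2 / 2 * |R * (R - 1)| * T)) fun w hw => ?_
  rw [Complex.norm_exp]
  have h1 := hw.1
  have h2 := hw.2
  exact Real.exp_le_exp.2 (re_mul_le_aux (qBS_re_le hσ (zLine_re R w.2)) (by positivity)
    ⟨by linarith, by linarith⟩)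

theorem symD_pbd (hσ : 0 ≤ σ2) : PBd (dom2 T) rho2 (fun w => symD σ2 (zLine R w.2) (T - w.1)) :=
  (expq_pbd hσ).mul (zLine_pbd.mul (zLine_pbd.sub (PBd.const (fun w _ => one_le_rho2 w) 1)))

theorem symA_pbd (hσ : 0 ≤ σ2) : PBd (dom2 T) rho2 (fun w => symA μ σ2 (zLine R w.2) (T - w.1)) := by
  have hz := zLine_measurable R
  have hτ : PBd (dom2 T) rho2 (fun w => ((T - w.1 : ℝ) : ℂ)) := by
    refine PBd.of_bound (fun w _ => one_le_rho2 w) (by fun_prop) T fun w hw => ?_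
    have h1 := hw.1
    have h2 := hw.2
    rw [norm_real, Real.norm_of_nonneg (by linarith)]; linarith
  refine (expq_pbd hσ).mul ((hτ.mul ((zLine_pbd.pow 3).sub zLine_pbd)).mul ?_)
  refine PBd.of_bound (fun w _ => one_le_rho2 w) (PP_measurable.comp (by fun_prop))
    (Real.exp (|(μ + σ2 / 2) * R| * T)) fun w hw => (PP_norm_le _).trans ?_
  refine Real.exp_le_exp.2 ?_
  have h1 := hw.1
  have h2 := hw.2
  have e : (μ + σ2 / 2 : ℂ) = ((μ + σ2 / 2 : ℝ) : ℂ) := by push_cast; rfl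
  rw [e, mul_comm _ ((T - w.1 : ℝ) : ℂ), re_ofReal_mul, re_ofReal_mul, zLine_re, abs_mul, mul_comm,
    abs_of_nonneg (by linarith : 0 ≤ T - w.1)]
  gcongr
  linarith

theorem cpow_pbd (s : ℝ) : PBd univ (fun y : ℝ => 1 + |y|) (fun y => cpowR s (zLine R y)) := by
  have hz := zLine_measurable R
  refine PBd.of_bound (fun w _ => by simp) (by unfold cpowR; fun_prop)
    (Real.exp (R * Real.log s)) fun w hw => ?_
  rw [cpowR_norm, zLine_re]

theorem sym_integrable {p : ℝ → ℂ} {G : ℝ × ℝ → ℂ} (hG : PBd (dom2 T) rho2 G) {t : ℝ}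
    (ht : t ∈ Icc 0 T) (s : ℝ) (hp : Measurable p)
    (hpi : ∀ N : ℕ, Integrable (fun y => (1 + |y|) ^ N * ‖p y‖)) :
    Integrable (fun y => G (t, y) * cpowR s (zLine R y) * p y) :=
  ((hG.slice ht).mul (cpow_pbd s)).integrable hp hpi

/-- Symbol of the greeks. -/
noncomputable def gS (σ2 T R : ℝ) (n : ℕ) (w : ℝ × ℝ) : ℂ :=
  Complex.exp (qBS σ2 (zLine R w.2) * ((T - w.1 : ℝ) : ℂ)) *
    ∏ k ∈ Finset.range n, (zLine R w.2 - (k : ℂ))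

theorem gS_pbd (hσ : 0 ≤ σ2) (n : ℕ) : PBd (dom2 T) rho2 (gS σ2 T R n) := by
  refine (expq_pbd hσ).mul ?_
  induction n with
  | zero => simpa using PBd.const (fun w _ => one_le_rho2 w) 1
  | succ n ih =>
    simp only [Finset.prod_range_succ]
    exact ih.mul (zLine_pbd.sub (PBd.const (fun w _ => one_le_rho2 w) _))

variable {l : ℝ → ℝ}

theorem cashGreek_eq (n : ℕ) (t s : ℝ) : cashGreek σ2 T R l n t s =
    ∫ y, gS σ2 T R n (t, y) * cpowR s (zLine R y) * pCoef l y := by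
  unfold cashGreek gS qBS
  refine integral_congr_ae (Filter.Eventually.of_forall fun y => ?_)
  push_cast
  ring

theorem cashGreek_two (t s : ℝ) : cashGreek σ2 T R l 2 t s =
    ∫ y, symD σ2 (zLine R y) (T - t) * cpowR s (zLine R y) * pCoef l y := by
  rw [cashGreek_eq]
  simp [gS, symD, Finset.prod_range_succ]

theorem Atil_eq (hσ : 0 ≤ σ2) (hp : Measurable (pCoef l))
    (hpi : ∀ N : ℕ, Integrable (fun y => (1 + |y|) ^ N * ‖pCoef l y‖)) {t : ℝ} (ht : t ∈ Icc 0 T)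
    (s : ℝ) : Atil σ2 T R l t s = ∫ y, (gS σ2 T R 2 (t, y) + gS σ2 T R 1 (t, y) - gS σ2 T R 0 (t, y)) *
      cpowR s (zLine R y) * pCoef l y := by
  have i := fun n => sym_integrable (R := R) (gS_pbd (R := R) (T := T) hσ n) ht s hp hpi
  simp only [Atil, cashGreek_eq]
  rw [← integral_add (i 2) (i 1), ← integral_sub (Integrable.fun_add (i 2) (i 1)) (i 0)]
  refine integral_congr_ae (Filter.Eventually.of_forall fun y => ?_)
  simp only [Pi.add_apply]
  ring

theorem Btil_eq (hσ : 0 ≤ σ2) (hp : Measurable (pCoef l))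
    (hpi : ∀ N : ℕ, Integrable (fun y => (1 + |y|) ^ N * ‖pCoef l y‖)) {t : ℝ} (ht : t ∈ Icc 0 T)
    (s : ℝ) : Btil σ2 T R l t s = ∫ y, (gS σ2 T R 3 (t, y) + 3 * gS σ2 T R 2 (t, y)) *
      cpowR s (zLine R y) * pCoef l y := by
  have i := fun n => sym_integrable (R := R) (gS_pbd (R := R) (T := T) hσ n) ht s hp hpi
  simp only [Btil, cashGreek_eq]
  rw [← integral_const_mul, ← integral_add (i 3) ((i 2).const_mul 3)]
  refine integral_congr_ae (Filter.Eventually.of_forall fun y => ?_)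
  beta_reduce
  ring

theorem Afun_eq (hσ : 0 ≤ σ2) (hp : Measurable (pCoef l))
    (hpi : ∀ N : ℕ, Integrable (fun y => (1 + |y|) ^ N * ‖pCoef l y‖)) {t : ℝ} (ht : t ∈ Icc 0 T)
    {s : ℝ} (hs : 0 < s) : Afun μ σ2 T R l t s =
      ∫ y, symA μ σ2 (zLine R y) (T - t) * cpowR s (zLine R y) * pCoef l y := by
  have i := fun n s => sym_integrable (R := R) (gS_pbd (R := R) (T := T) hσ n) ht s hp hpi
  have ec : (μ + σ2 / 2 : ℂ) = ((μ + σ2 / 2 : ℝ) : ℂ) := by push_cast; rfl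
  unfold Afun
  split_ifs with h
  · simp only [cashGreek_eq]
    rw [← integral_const_mul, ← integral_add (i 3 s) ((i 2 s).const_mul 3), ← integral_const_mul]
    refine integral_congr_ae (Filter.Eventually.of_forall fun y => ?_)
    simp only [symA, ec, h, ofReal_zero, zero_mul, PP_zero, gS, Finset.prod_range_succ,
      Finset.prod_range_zero]
    push_cast
    ring
  · have hA : PBd (dom2 T) rho2 (fun w => gS σ2 T R 2 w + gS σ2 T R 1 w - gS σ2 T R 0 w) :=
      ((gS_pbd hσ 2).add (gS_pbd hσ 1)).sub (gS_pbd hσ 0)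
    rw [Atil_eq hσ hp hpi ht, Atil_eq hσ hp hpi ht, ← integral_sub (sym_integrable hA ht _ hp hpi)
      (sym_integrable hA ht _ hp hpi), ← integral_div]
    refine integral_congr_ae (Filter.Eventually.of_forall fun y => ?_)
    have hne : ((μ + σ2 / 2 : ℝ) : ℂ) ≠ 0 := by exact_mod_cast h
    beta_reduce
    rw [div_eq_iff hne, cpowR_exp hs, symA, ec]
    have hP := PP_eq (((μ + σ2 / 2 : ℝ) : ℂ) * zLine R y * ((T - t : ℝ) : ℂ))
    have eE : Complex.exp (zLine R y * (((μ + σ2 / 2) * (T - t) : ℝ) : ℂ)) =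
        Complex.exp (((μ + σ2 / 2 : ℝ) : ℂ) * zLine R y * ((T - t : ℝ) : ℂ)) := by
      congr 1; push_cast; ring
    rw [eE]
    set PPv := PP (((μ + σ2 / 2 : ℝ) : ℂ) * zLine R y * ((T - t : ℝ) : ℂ))
    set Ev := Complex.exp (((μ + σ2 / 2 : ℝ) : ℂ) * zLine R y * ((T - t : ℝ) : ℂ))
    simp only [gS, Finset.prod_range_succ, Finset.prod_range_zero, Nat.cast_zero, Nat.cast_one]
    linear_combination (-(Complex.exp (qBS σ2 (zLine R y) * ((T - t : ℝ) : ℂ)) *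
      (zLine R y ^ 2 - 1) * cpowR s (zLine R y) * pCoef l y)) * hP

theorem Bfun_eq (hσ : 0 ≤ σ2) (hp : Measurable (pCoef l))
    (hpi : ∀ N : ℕ, Integrable (fun y => (1 + |y|) ^ N * ‖pCoef l y‖)) {t : ℝ} (ht : t ∈ Icc 0 T)
    {s : ℝ} (hs : 0 < s) : Bfun μ σ2 T R l t s =
      ∫ y, (zLine R y * symA μ σ2 (zLine R y) (T - t)) * cpowR s (zLine R y) * pCoef l y := by
  have i := fun n s => sym_integrable (R := R) (gS_pbd (R := R) (T := T) hσ n) ht s hp hpi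
  have ec : (μ + σ2 / 2 : ℂ) = ((μ + σ2 / 2 : ℝ) : ℂ) := by push_cast; rfl
  unfold Bfun
  split_ifs with h
  · simp only [cashGreek_eq]
    rw [← integral_const_mul, ← integral_const_mul, ← integral_add (i 4 s) ((i 3 s).const_mul 6),
      ← integral_add (Integrable.fun_add (i 4 s) ((i 3 s).const_mul 6)) ((i 2 s).const_mul 6), ← integral_const_mul]
    refine integral_congr_ae (Filter.Eventually.of_forall fun y => ?_)
    simp only [symA, ec, h, ofReal_zero, zero_mul, PP_zero, gS, Finset.prod_range_succ,
      Finset.prod_range_zero, Pi.add_apply]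
    push_cast
    ring
  · have hA : PBd (dom2 T) rho2 (fun w => gS σ2 T R 3 w + 3 * gS σ2 T R 2 w) :=
      (gS_pbd hσ 3).add ((PBd.const (fun w _ => one_le_rho2 w) 3).mul (gS_pbd hσ 2))
    rw [Btil_eq hσ hp hpi ht, Btil_eq hσ hp hpi ht, ← integral_sub (sym_integrable hA ht _ hp hpi)
      (sym_integrable hA ht _ hp hpi), ← integral_div]
    refine integral_congr_ae (Filter.Eventually.of_forall fun y => ?_)
    have hne : ((μ + σ2 / 2 : ℝ) : ℂ) ≠ 0 := by exact_mod_cast h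
    beta_reduce
    rw [div_eq_iff hne, cpowR_exp hs, symA, ec]
    have hP := PP_eq (((μ + σ2 / 2 : ℝ) : ℂ) * zLine R y * ((T - t : ℝ) : ℂ))
    have eE : Complex.exp (zLine R y * (((μ + σ2 / 2) * (T - t) : ℝ) : ℂ)) =
        Complex.exp (((μ + σ2 / 2 : ℝ) : ℂ) * zLine R y * ((T - t : ℝ) : ℂ)) := by
      congr 1; push_cast; ring
    rw [eE]
    set PPv := PP (((μ + σ2 / 2 : ℝ) : ℂ) * zLine R y * ((T - t : ℝ) : ℂ))
    set Ev := Complex.exp (((μ + σ2 / 2 : ℝ) : ℂ) * zLine R y * ((T - t : ℝ) : ℂ))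
    simp only [gS, Finset.prod_range_succ, Finset.prod_range_zero, Nat.cast_zero, Nat.cast_one,
      Nat.cast_ofNat]
    linear_combination (-(Complex.exp (qBS σ2 (zLine R y) * ((T - t : ℝ) : ℂ)) *
      (zLine R y ^ 3 - zLine R y) * cpowR s (zLine R y) * pCoef l y)) * hP

end

end

section

section
variable {μ σ2 T R S₀ : ℝ} {l : ℝ → ℝ}

/-- Symbol of the combination `½σ²D₂ + ⅙σ⁴B`. -/
noncomputable def gG (μ σ2 T R σ : ℝ) (w : ℝ × ℝ) : ℂ :=
  (1 / 2 : ℂ) * (σ : ℂ) ^ 2 * symD σ2 (zLine R w.2) (T - w.1) +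
    (1 / 6 : ℂ) * (σ : ℂ) ^ 4 * (zLine R w.2 * symA μ σ2 (zLine R w.2) (T - w.1))

theorem zA_pbd (hσ : 0 ≤ σ2) :
    PBd (dom2 T) rho2 (fun w => zLine R w.2 * symA μ σ2 (zLine R w.2) (T - w.1)) :=
  zLine_pbd.mul (symA_pbd hσ)

theorem gG_pbd (hσ : 0 ≤ σ2) (σ : ℝ) : PBd (dom2 T) rho2 (gG μ σ2 T R σ) :=
  ((PBd.const (fun w _ => one_le_rho2 w) _).mul (symD_pbd hσ)).add
    ((PBd.const (fun w _ => one_le_rho2 w) _).mul (zA_pbd hσ))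

theorem trip_value (hσ2 : 0 ≤ σ2) (hT : 0 ≤ T) (hS₀ : 0 < S₀) (hp : Measurable (pCoef l))
    (hpi : ∀ N : ℕ, Integrable (fun y => (1 + |y|) ^ N * ‖pCoef l y‖)) {σ s3 s4 k3 k4 : ℝ}
    (hσ : σ ^ 2 = σ2) (h3 : k3 = s3 * σ ^ 3) (h4 : k4 = s4 * σ ^ 4) :
    ∫ u, (∫ v, (∫ t in Ioc 0 T, cpowR S₀ (zLine R u + zLine R v) *
      Complex.exp ((μ * (zLine R u + zLine R v) + σ2 / 2 * (zLine R u + zLine R v) ^ 2) * t) *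
      (2 * (k4 / 4 * symD σ2 (zLine R u) (T - t) * symD σ2 (zLine R v) (T - t) +
        σ2 * (zLine R u * (k3 / 6 * symA μ σ2 (zLine R u) (T - t))) *
          (zLine R v * (k3 / 6 * symA μ σ2 (zLine R v) (T - t))) +
        k3 / 2 * (symD σ2 (zLine R u) (T - t) * (zLine R v * (k3 / 6 * symA μ σ2 (zLine R v) (T - t))) +
          symD σ2 (zLine R v) (T - t) * (zLine R u * (k3 / 6 * symA μ σ2 (zLine R u) (T - t)))))) * 1)
          * pCoef l v) * pCoef l u =
    2 * ((1 / 4 : ℂ) * (σ : ℂ) ^ 4 * ((s4 : ℂ) - (s3 : ℂ) ^ 2) *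
        (∫ t in (0 : ℝ)..T,
          ∫ x : ℝ, (cashGreek σ2 T R l 2 t (S₀ * Real.exp (μ * t + x))) ^ 2
            ∂(gaussianReal 0 (Real.toNNReal (σ2 * t)))) +
      (s3 : ℂ) ^ 2 *
        ∫ t in (0 : ℝ)..T,
          ∫ x : ℝ,
            ((1 / 2 : ℂ) * (σ : ℂ) ^ 2 *
                cashGreek σ2 T R l 2 t (S₀ * Real.exp (μ * t + x)) +
              (1 / 6 : ℂ) * (σ : ℂ) ^ 4 *
                Bfun μ σ2 T R l t (S₀ * Real.exp (μ * t + x))) ^ 2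
            ∂(gaussianReal 0 (Real.toNNReal (σ2 * t)))) := by
  have hD : PBd (dom2 T) rho2 (fun w => symD σ2 (zLine R w.2) (T - w.1)) := symD_pbd hσ2
  have hG : PBd (dom2 T) rho2 (gG μ σ2 T R σ) := gG_pbd hσ2 σ
  have q1 := quad_eq (μ := μ) (R := R) hS₀ hσ2 hT hD hp hpi
  have q2 := quad_eq (μ := μ) (R := R) hS₀ hσ2 hT hG hp hpi
  have e1 : (∫ t in (0 : ℝ)..T,
          ∫ x : ℝ, (cashGreek σ2 T R l 2 t (S₀ * Real.exp (μ * t + x))) ^ 2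
            ∂(gaussianReal 0 (Real.toNNReal (σ2 * t)))) =
      ∫ w, (ker3 μ σ2 S₀ R w * (symD σ2 (zLine R w.1.1) (T - w.2) *
        symD σ2 (zLine R w.1.2) (T - w.2))) * (pCoef l w.1.1 * pCoef l w.1.2) ∂(meas3 T) := by
    simp only [cashGreek_two]
    exact q1.symm
  have e2 : (∫ t in (0 : ℝ)..T,
          ∫ x : ℝ,
            ((1 / 2 : ℂ) * (σ : ℂ) ^ 2 *
                cashGreek σ2 T R l 2 t (S₀ * Real.exp (μ * t + x)) +
              (1 / 6 : ℂ) * (σ : ℂ) ^ 4 *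
                Bfun μ σ2 T R l t (S₀ * Real.exp (μ * t + x))) ^ 2
            ∂(gaussianReal 0 (Real.toNNReal (σ2 * t)))) =
      ∫ w, (ker3 μ σ2 S₀ R w * (gG μ σ2 T R σ (w.2, w.1.1) * gG μ σ2 T R σ (w.2, w.1.2))) *
        (pCoef l w.1.1 * pCoef l w.1.2) ∂(meas3 T) := by
    rw [q2]
    refine intervalIntegral.integral_congr fun t ht => ?_
    rw [uIcc_of_le hT] at ht
    refine integral_congr_ae (Filter.Eventually.of_forall fun x => ?_)
    beta_reduce
    rw [cashGreek_two, Bfun_eq hσ2 hp hpi ht (by positivity), ← integral_const_mul,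
      ← integral_const_mul, ← integral_add
        ((sym_integrable hD ht _ hp hpi).const_mul _)
        ((sym_integrable (zA_pbd hσ2) ht _ hp hpi).const_mul _)]
    congr 1
    refine integral_congr_ae (Filter.Eventually.of_forall fun y => ?_)
    simp only [gG]
    ring
  rw [e1, e2]
  have kp : PBd (dom3 T) rho3 (ker3 μ σ2 S₀ R) := ker3_pbd hσ2
  have p1 := kp.mul (hD.lift1.mul hD.lift2)
  have p2 := kp.mul (hG.lift1.mul hG.lift2)
  have i1 := trip_integrable p1 hp hpi
  have i2 := trip_integrable p2 hp hpi
  have c1 := PBd.const (A := dom3 T) (ρ := rho3) (fun w _ => one_le_rho3 w)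
    ((1 / 4 : ℂ) * (σ : ℂ) ^ 4 * ((s4 : ℂ) - (s3 : ℂ) ^ 2))
  have c2 := PBd.const (A := dom3 T) (ρ := rho3) (fun w _ => one_le_rho3 w) ((s3 : ℂ) ^ 2)
  have c3 := PBd.const (A := dom3 T) (ρ := rho3) (fun w _ => one_le_rho3 w) 2
  have te := trip_eq (c3.mul ((c1.mul p1).add (c2.mul p2))) hp hpi
  rw [← integral_const_mul, ← integral_const_mul, ← integral_add (i1.const_mul _) (i2.const_mul _),
    ← integral_const_mul]
  refine Eq.trans ?_ (te.trans ?_)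
  · congr 1; funext u
    congr 2; funext v
    congr 2; funext t
    simp only [ker3, gG]
    subst h3 h4
    rw [← hσ]
    push_cast
    ring
  · congr 1; funext w
    ring

theorem eps_value {c : ℝ} {K : Measure ℝ} {U : Set ℝ} {m0 M0 : ℝ} {ν : Measure ℝ}
    (hκ : ∀ l ∈ U, ∀ z : ℂ, z.re ∈ Icc m0 M0 → kappa μ c K l z = μ * z + z ^ 2 * Phi ν 0 (l * z))
    (hm : m0 ≤ 0) (hM : 2 ≤ M0) (hm2 : m0 ≤ 2 * R) (hM2 : 2 * R ≤ M0) (hT : 0 ≤ T)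
    (alpha : ℝ → ℂ → ℝ → ℂ)
    (halpha : ∀ (lam : ℝ) (z : ℂ) (t : ℝ), alpha lam z t =
      (1 - kappa μ c K lam 1 *
          ∫ u in t..T, z * Complex.exp (kappa μ c K lam z * ((u : ℂ) - (T : ℂ))) *
            Complex.exp (((σ2 : ℝ) : ℂ) / 2 * z * (z - 1) * ((T : ℂ) - (u : ℂ)))) *
        Complex.exp (kappa μ c K lam z * ((T : ℂ) - (t : ℂ))))
    (w : ℝ → ℂ)
    (hw : ∀ lam : ℝ, w lam =
      ∫ y : ℝ, cpowR S₀ (zLine R y) * alpha lam (zLine R y) 0 * pCoef l y)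
    (cBS : ℂ)
    (h : ℝ → ℝ → ℂ → ℂ → ℂ)
    (hh : ∀ (lam t : ℝ) (y z : ℂ), h lam t y z =
      kbar μ c K lam y z * alpha lam y t * alpha lam z t -
        kbar μ c K lam y 1 * alpha lam y t * z *
          Complex.exp (((σ2 : ℝ) : ℂ) / 2 * z * (z - 1) * ((T : ℂ) - (t : ℂ))) -
        kbar μ c K lam z 1 * alpha lam z t * y *
          Complex.exp (((σ2 : ℝ) : ℂ) / 2 * y * (y - 1) * ((T : ℂ) - (t : ℂ))) +
        kbar μ c K lam 1 1 * y * z *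
          Complex.exp (((σ2 : ℝ) : ℂ) / 2 * (z * (z - 1) + y * (y - 1)) *
            ((T : ℂ) - (t : ℂ))))
    (eps2 : ℝ → ℂ)
    (heps2 : ∀ lam : ℝ, eps2 lam =
      (w lam - cBS) ^ 2 +
        ∫ u : ℝ, ∫ v : ℝ, ∫ t in (0 : ℝ)..T,
          cpowR S₀ (zLine R u + zLine R v) *
            Complex.exp (kappa μ c K lam (zLine R u + zLine R v) * (t : ℂ)) *
            h lam t (zLine R u) (zLine R v) * pCoef l u * pCoef l v)
    {lam : ℝ} (hlam : lam ∈ U) :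
    eps2 lam = (epsJ μ ν σ2 S₀ R T (pCoef l) cBS).a lam () := by
  have r1 : (1:ℂ).re ∈ Icc m0 M0 := by rw [one_re]; constructor <;> linarith
  have r2 : (1 + 1:ℂ).re ∈ Icc m0 M0 := by rw [add_re, one_re]; constructor <;> linarith
  have rz : ∀ y, (zLine R y).re ∈ Icc m0 M0 := fun y => by
    rw [zLine_re]; constructor <;> linarith
  have rz1 : ∀ y, (zLine R y + 1).re ∈ Icc m0 M0 := fun y => by
    rw [add_re, zLine_re, one_re]; constructor <;> linarith
  have rzz : ∀ y y', (zLine R y + zLine R y').re ∈ Icc m0 M0 := fun y y' => by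
    rw [add_re, zLine_re, zLine_re]; constructor <;> linarith
  have ha : ∀ {Ω : Type} (y t : ℝ) (Z : Ω → ℂ) (τ : Ω → ℝ) (ω : Ω), Z ω = zLine R y → τ ω = T - t →
      alpha lam (zLine R y) t = (alphaJ μ ν σ2 Z τ).a lam ω := by
    intro Ω y t Z τ ω hZ hτ
    rw [alphaJ_a_eq hτ, halpha]
    simp only [kapJ, hZ, hκ lam hlam _ r1, hκ lam hlam _ (rz y)]
  have ew : w lam = (wJ μ ν σ2 S₀ R T (pCoef l)).a lam () := by
    rw [hw]
    simp only [wJ, HJet.integ, HJet.mul, HJet.const]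
    congr 1; funext y
    rw [ha y 0 (fun w : Unit × ℝ => zLine R w.2) (fun _ => T) ((), y) rfl (by simp)]
  have ed : (∫ u : ℝ, ∫ v : ℝ, ∫ t in (0 : ℝ)..T,
          cpowR S₀ (zLine R u + zLine R v) *
            Complex.exp (kappa μ c K lam (zLine R u + zLine R v) * (t : ℂ)) *
            h lam t (zLine R u) (zLine R v) * pCoef l u * pCoef l v) =
      (dblJ μ ν σ2 S₀ R T (pCoef l)).a lam () := by
    simp only [dblJ, HJet.integ]
    congr 1; funext u
    rw [← integral_mul_const]
    congr 1; funext v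
    rw [intervalIntegral.integral_of_le hT, ← integral_mul_const, ← integral_mul_const]
    congr 1; funext t
    have hE : ∀ y z : ℂ, Complex.exp (((σ2 : ℝ) : ℂ) / 2 * (z * (z - 1) + y * (y - 1)) *
            ((T : ℂ) - (t : ℂ))) = Complex.exp (qBS σ2 y * ((T - t : ℝ) : ℂ)) *
              Complex.exp (qBS σ2 z * ((T - t : ℝ) : ℂ)) := fun y z => by
      rw [← Complex.exp_add]; congr 1; unfold qBS; push_cast; ring
    have hq : ∀ z : ℂ, Complex.exp (((σ2 : ℝ) : ℂ) / 2 * z * (z - 1) * ((T : ℂ) - (t : ℂ))) =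
        Complex.exp (qBS σ2 z * ((T - t : ℝ) : ℂ)) := fun z => by
      congr 1; unfold qBS; push_cast; ring
    rw [hh, hE, hq, hq,
      ha u t (fun w : ((Unit × ℝ) × ℝ) × ℝ => zLine R w.1.1.2) (fun w => T - w.2) ((((), u), v), t)
        rfl rfl,
      ha v t (fun w : ((Unit × ℝ) × ℝ) × ℝ => zLine R w.1.2) (fun w => T - w.2) ((((), u), v), t)
        rfl rfl]
    simp only [j2J, hJ, kbJ, HJet.mul, HJet.sub, HJet.add, HJet.const, HJet.exp, kbar]
    rw [hκ lam hlam _ r1, hκ lam hlam _ r2, hκ lam hlam _ (rz u), hκ lam hlam _ (rz v),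
      hκ lam hlam _ (rz1 u), hκ lam hlam _ (rz1 v), hκ lam hlam _ (rzz u v)]
    simp only [kapJ]
    ring
  rw [heps2, ew, ed]
  simp only [epsJ, HJet.add, HJet.mul, HJet.sub, HJet.const]
  ring

end

end

/-- second-order expansion of the mean squared hedging error of the
Black-Scholes hedge applied to the Lévy model (Theorem `errBSapprox`). -/
theorem black_scholes_hedge_error_expansion
    (μ c : ℝ) (hc : 0 ≤ c) (K : MeasureTheory.Measure ℝ)
    (hK0 : K {0} = 0)
    (hKmin : ∫⁻ x : ℝ, ENNReal.ofReal (min 1 (x ^ 2)) ∂K ≠ ⊤)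
    (R : ℝ) (hR : R ≠ 0) (a b : ℝ)
    (h0 : (0 : ℝ) ∈ Set.Ioo a b) (h2 : (2 : ℝ) ∈ Set.Ioo a b)
    (h2R : 2 * R ∈ Set.Ioo a b)
    (hK5 : ∫⁻ x in {x : ℝ | 1 ≤ |x|}, ENNReal.ofReal (|x| ^ 5) ∂K ≠ ⊤)
    (hKexp : ∀ s ∈ Set.Ioo a b,
      ∫⁻ x in {x : ℝ | 1 ≤ |x|}, ENNReal.ofReal (Real.exp (s * x)) ∂K ≠ ⊤)
    (σ2 : ℝ) (hσ2 : σ2 = c + ∫ x : ℝ, x ^ 2 ∂K) (hσ2pos : 0 < σ2)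
    (σ m s3 s4 : ℝ) (hσ : σ = Real.sqrt σ2) (hm : m = (μ + σ2 / 2) / σ2)
    (hs3 : s3 = (∫ x : ℝ, x ^ 3 ∂K) / σ ^ 3) (hs4 : s4 = (∫ x : ℝ, x ^ 4 ∂K) / σ ^ 4)
    (f : ℝ → ℝ) (hf : ContDiffOn ℝ (⊤ : ℕ∞) f (Set.Ioi 0))
    (l : ℝ → ℝ) (hl : l = fun x => f (Real.exp x) * Real.exp (-R * x))
    (hlint : ∀ n : ℕ, Integrable (iteratedDeriv n l))
    (T S₀ : ℝ) (hT : 0 < T) (hS₀ : 0 < S₀)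
    (alpha : ℝ → ℂ → ℝ → ℂ)
    (halpha : ∀ (lam : ℝ) (z : ℂ) (t : ℝ), alpha lam z t =
      (1 - kappa μ c K lam 1 *
          ∫ u in t..T, z * Complex.exp (kappa μ c K lam z * ((u : ℂ) - (T : ℂ))) *
            Complex.exp (((σ2 : ℝ) : ℂ) / 2 * z * (z - 1) * ((T : ℂ) - (u : ℂ)))) *
        Complex.exp (kappa μ c K lam z * ((T : ℂ) - (t : ℂ))))
    (w : ℝ → ℂ)
    (hw : ∀ lam : ℝ, w lam =
      ∫ y : ℝ, cpowR S₀ (zLine R y) * alpha lam (zLine R y) 0 * pCoef l y)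
    (cBS : ℂ)
    (hcBS : cBS = ∫ y : ℝ, cpowR S₀ (zLine R y) *
      Complex.exp (((σ2 : ℝ) : ℂ) / 2 * zLine R y * (zLine R y - 1) * (T : ℂ)) * pCoef l y)
    (h : ℝ → ℝ → ℂ → ℂ → ℂ)
    (hh : ∀ (lam t : ℝ) (y z : ℂ), h lam t y z =
      kbar μ c K lam y z * alpha lam y t * alpha lam z t -
        kbar μ c K lam y 1 * alpha lam y t * z *
          Complex.exp (((σ2 : ℝ) : ℂ) / 2 * z * (z - 1) * ((T : ℂ) - (t : ℂ))) -
        kbar μ c K lam z 1 * alpha lam z t * y *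
          Complex.exp (((σ2 : ℝ) : ℂ) / 2 * y * (y - 1) * ((T : ℂ) - (t : ℂ))) +
        kbar μ c K lam 1 1 * y * z *
          Complex.exp (((σ2 : ℝ) : ℂ) / 2 * (z * (z - 1) + y * (y - 1)) *
            ((T : ℂ) - (t : ℂ))))
    (eps2 : ℝ → ℂ)
    (heps2 : ∀ lam : ℝ, eps2 lam =
      (w lam - cBS) ^ 2 +
        ∫ u : ℝ, ∫ v : ℝ, ∫ t in (0 : ℝ)..T,
          cpowR S₀ (zLine R u + zLine R v) *
            Complex.exp (kappa μ c K lam (zLine R u + zLine R v) * (t : ℂ)) *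
            h lam t (zLine R u) (zLine R v) * pCoef l u * pCoef l v) :
    ContDiffOn ℝ 2 eps2 (Set.Icc 0 1) ∧
    eps2 0 = 0 ∧
    iteratedDerivWithin 1 eps2 (Set.Icc 0 1) 0 = 0 ∧
    (1 / 2 : ℂ) * iteratedDerivWithin 2 eps2 (Set.Icc 0 1) 0 =
      (1 / 4 : ℂ) * (σ : ℂ) ^ 4 * ((s4 : ℂ) - (s3 : ℂ) ^ 2) *
        (∫ t in (0 : ℝ)..T,
          ∫ x : ℝ, (cashGreek σ2 T R l 2 t (S₀ * Real.exp (μ * t + x))) ^ 2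
            ∂(gaussianReal 0 (Real.toNNReal (σ2 * t)))) +
      (1 / 36 : ℂ) * (s3 : ℂ) ^ 2 * (σ : ℂ) ^ 6 * (Afun μ σ2 T R l 0 S₀) ^ 2 +
      (s3 : ℂ) ^ 2 *
        ∫ t in (0 : ℝ)..T,
          ∫ x : ℝ,
            ((1 / 2 : ℂ) * (σ : ℂ) ^ 2 *
                cashGreek σ2 T R l 2 t (S₀ * Real.exp (μ * t + x)) +
              (1 / 6 : ℂ) * (σ : ℂ) ^ 4 *
                Bfun μ σ2 T R l t (S₀ * Real.exp (μ * t + x))) ^ 2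
            ∂(gaussianReal 0 (Real.toNNReal (σ2 * t))) := by
  have hσ0 : 0 ≤ σ2 := hσ2pos.le
  have hσsq : σ ^ 2 = σ2 := by rw [hσ, Real.sq_sqrt hσ0]
  have hσpos : 0 < σ := by rw [hσ]; exact Real.sqrt_pos.2 hσ2pos
  have hk3 : (∫ x : ℝ, x ^ 3 ∂K) = s3 * σ ^ 3 := by
    rw [hs3, div_mul_cancel₀ _ (by positivity)]
  have hk4 : (∫ x : ℝ, x ^ 4 ∂K) = s4 * σ ^ 4 := by
    rw [hs4, div_mul_cancel₀ _ (by positivity)]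
  have hm0 : min 0 (2 * R) ≤ 0 := min_le_left _ _
  have hM0 : 2 ≤ max 2 (2 * R) := le_max_left _ _
  have hm2 : min 0 (2 * R) ≤ 2 * R := min_le_right _ _
  have hM2 : 2 * R ≤ max 2 (2 * R) := le_max_right _ _
  obtain ⟨U, hU, hIU, hset, hκ⟩ := kSetup_exists μ c K hKmin a b h0 hKexp hc hm0 hM0
    (lt_min h0.1 h2R.1) (max_lt h2.2 h2R.2)
  have hfin := lkNu_finite c K hKmin a b h0 hKexp
  obtain ⟨v0, v1, v2⟩ := Phi_zero_vals c K hKmin a b h0 hKexp hc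
  rw [← hσ2] at v0
  obtain ⟨hp, hpi⟩ := pCoef_decay R f hf l hl hlint
  have good := epsJ_good (S₀ := S₀) cBS hset hU hm0 hM0 hm2 hM2 hσ0 hT.le hp hpi
  obtain ⟨cd, d1, d2⟩ := good.contDiffOn hU (w := ()) trivial
  have heq : ∀ lam ∈ U, eps2 lam = (epsJ μ (lkNu c K) σ2 S₀ R T (pCoef l) cBS).a lam () :=
    fun lam hlam => eps_value hκ hm0 hM0 hm2 hM2 hT.le alpha halpha w hw cBS h hh eps2 heps2 hlam
  obtain ⟨z0, z1, z2⟩ := epsJ_zero (μ := μ) cBS v0 v1 v2 hcBS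
  have h0I : (0:ℝ) ∈ Icc (0:ℝ) 1 := ⟨le_rfl, zero_le_one⟩
  have h0U : (0:ℝ) ∈ U := hIU h0I
  have cde : ContDiffOn ℝ 2 eps2 U := cd.congr heq
  have cda : ContDiffAt ℝ 2 eps2 0 := cde.contDiffAt (hU.mem_nhds h0U)
  have hev : eps2 =ᶠ[nhds 0] fun lam => (epsJ μ (lkNu c K) σ2 S₀ R T (pCoef l) cBS).a lam () := by
    filter_upwards [hU.mem_nhds h0U] with lam hlam using heq lam hlam
  have hud : UniqueDiffOn ℝ (Icc (0:ℝ) 1) := uniqueDiffOn_Icc zero_lt_one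
  refine ⟨cde.mono hIU, (heq 0 h0U).trans z0, ?_, ?_⟩
  · rw [iteratedDerivWithin_eq_iteratedDeriv hud (cda.of_le (by norm_num)) h0I, iteratedDeriv_one,
      hev.deriv_eq, d1 0 h0U, z1]
  · rw [iteratedDerivWithin_eq_iteratedDeriv hud cda h0I, hev.iteratedDeriv_eq, d2 0 h0U, z2,
      trip_value hσ0 hT.le hS₀ hp hpi hσsq hk3 hk4,
      Afun_eq hσ0 hp hpi ⟨le_rfl, hT.le⟩ hS₀, sub_zero, hk3]
    push_cast
    ring
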